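/- arXiv:2109.14803 — 4 statements merged into one kernel-verified Lean document; each statement's English description precedes it below -/
import Mathlib

section
/- Fix c ∈ (0,1) and ξ ∈ (0,1), and set a := √(1 − c²cos²ξ)/(c·sin ξ) and ρ := arccos(c·cos ξ)/a. Let ψ : ℝ → ℝ be a smooth function with ψ(x) = 0 for all x ≤ 0, ψ(x) = 1 for all x ≥ 1, and 0 ≤ ψ ≤ 1. Let ζ > 0 and 0 < κ < π/2 − ξ, and define l : ℝ → ℝ by l(t) := −[(1 − ψ((t−ρ)/ζ))·a·sin(a t) + ψ((t−ρ)/ζ)·c·sin(t − ρ − ζ + ξ)]. Define φ on [0, ρ+ζ+π/2−ξ] by: φ(r) = sin(a r)/a for r ∈ [0, ρ]; φ(r) = sin(aρ)/a + (r−ρ)cos(aρ) + ∫_ρ^r ∫_ρ^s l(t) dt ds for r ∈ [ρ, ρ+ζ]; φ(r) = c·sin ξ + c(r−ρ−ζ)cos ξ + (1 − ψ((r−ρ−ζ)/κ))·∫_ρ^r ∫_ρ^s l(t) dt ds + ψ((r−ρ−ζ)/κ)·∫_{ρ+ζ}^r ∫_{ρ+ζ}^s l(t) dt ds + (1 − ψ((r−ρ−ζ)/κ))·cζ·cos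 ξ for r ∈ [ρ+ζ, ρ+ζ+κ]; and φ(r) = c·sin(r−ρ−ζ+ξ) for r ∈ [ρ+ζ+κ, ρ+ζ+π/2−ξ]. Then φ is well defined (the adjacent formulas agree at r = ρ, ρ+ζ and ρ+ζ+κ) and φ is infinitely differentiable on the open interval (0, ρ+ζ+π/2−ξ). -/
open Real MeasureTheory intervalIntegral

/-!
The acceleration `l` passes from `f''` to `g''`, where `f r = sin (a r) / a` and
`g r = c sin (r - ρ - ζ + ξ)` are the two profiles to be glued. Let `P` and `Q` solve `u'' = l`
with the initial data of `f` at `ρ` and of `g` at `ρ + ζ`, respectively. Since `l = f''` before `ρ`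
and `l = g''` after `ρ + ζ`, we have `P = f` before `ρ` and `Q = g` after `ρ + ζ`. The choice of `a`
and `ρ` makes the initial data of `f` at `ρ` equal to `(c sin ξ, c cos ξ)`, those of `g` at `ρ + ζ`,
and this turns the third formula into the transition from `P` to `Q` over `[ρ + ζ, ρ + ζ + κ]`.
Hence `φ` coincides everywhere with that one transition, which is as smooth as `ψ`.
-/

section DoublePrimitive

variable {E : Type*} [NormedAddCommGroup E] [NormedSpace ℝ E]

/-- The solution `u` of the initial value problem `u'' = l`, `u b = y`, `u' b = v`, used to follow
a prescribed acceleration `l` from the initial data of a profile at `b`. -/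
noncomputable def doublePrimitive (l : ℝ → E) (b : ℝ) (y v : E) (r : ℝ) : E :=
  y + (r - b) • v + ∫ s in b..r, ∫ t in b..s, l t

theorem doublePrimitive_congr {l m : ℝ → E} {b r : ℝ} (h : Set.EqOn l m (Set.uIcc b r)) (y v : E) :
    doublePrimitive l b y v r = doublePrimitive m b y v r := by
  have inner_eq : Set.EqOn (fun s => ∫ t in b..s, l t) (fun s => ∫ t in b..s, m t)
      (Set.uIcc b r) := fun s hs =>
    integral_congr (h.mono (Set.uIcc_subset_uIcc_left hs))
  rw [doublePrimitive, doublePrimitive, integral_congr inner_eq]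

variable [CompleteSpace E]

theorem contDiff_integral_right {n : ℕ∞} {f : ℝ → E} (hf : ContDiff ℝ n f) (b : ℝ) :
    ContDiff ℝ (n + 1) fun r => ∫ t in b..r, f t := by
  have hderiv (x : ℝ) : HasDerivAt (fun r => ∫ t in b..r, f t) (f x) x :=
    (hf.continuous.integral_hasStrictDerivAt b x).hasDerivAt
  refine contDiff_succ_iff_deriv.2 ⟨fun x => (hderiv x).differentiableAt, by simp, ?_⟩
  rwa [funext fun x => (hderiv x).deriv]

theorem contDiff_doublePrimitive {n : ℕ∞} {l : ℝ → E} (hl : ContDiff ℝ n l) (b : ℝ) (y v : E) :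
    ContDiff ℝ n (doublePrimitive l b y v) := by
  have hint : ContDiff ℝ n fun r => ∫ s in b..r, ∫ t in b..s, l t :=
    (contDiff_integral_right ((contDiff_integral_right hl b).of_le le_self_add) b).of_le
      le_self_add
  unfold doublePrimitive
  fun_prop

theorem doublePrimitive_eq_of_hasDerivAt {f f' f'' : ℝ → E} {b r : ℝ}
    (hf : ∀ x ∈ Set.uIcc b r, HasDerivAt f (f' x) x)
    (hf' : ∀ x ∈ Set.uIcc b r, HasDerivAt f' (f'' x) x)
    (hint : IntervalIntegrable f'' volume b r) :
    doublePrimitive f'' b (f b) (f' b) r = f r := by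
  have inner_eq : Set.EqOn (fun s => ∫ t in b..s, f'' t) (fun s => f' s - f' b)
      (Set.uIcc b r) := fun s hs => by
    have hsub : Set.uIcc b s ⊆ Set.uIcc b r := Set.uIcc_subset_uIcc_left hs
    exact integral_eq_sub_of_hasDerivAt (fun x hx => hf' x (hsub hx)) (hint.mono_set hsub)
  have hint' : IntervalIntegrable f' volume b r :=
    ContinuousOn.intervalIntegrable fun x hx => (hf' x hx).continuousAt.continuousWithinAt
  rw [doublePrimitive, integral_congr inner_eq, integral_sub hint' intervalIntegrable_const,
    integral_eq_sub_of_hasDerivAt hf hint', intervalIntegral.integral_const]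
  abel

end DoublePrimitive

section Transition

variable {E : Type*} [NormedAddCommGroup E] [NormedSpace ℝ E] {ψ : ℝ → ℝ} {b δ r : ℝ}

/-- The transition from `f` to `g` over the interval `[b, b + δ]`, driven by a cutoff function `ψ`
that rises from `0` to `1` on `[0, 1]`. -/
noncomputable def transition (ψ : ℝ → ℝ) (b δ : ℝ) (f g : ℝ → E) (r : ℝ) : E :=
  (1 - ψ ((r - b) / δ)) • f r + ψ ((r - b) / δ) • g r

theorem transition_of_le (hψ0 : ∀ x ≤ 0, ψ x = 0) (hδ : 0 ≤ δ) (f g : ℝ → E) (hr : r ≤ b) :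
    transition ψ b δ f g r = f r := by
  simp [transition, hψ0 _ (div_nonpos_of_nonpos_of_nonneg (sub_nonpos.2 hr) hδ)]

theorem transition_of_ge (hψ1 : ∀ x, 1 ≤ x → ψ x = 1) (hδ : 0 < δ) (f g : ℝ → E)
    (hr : b + δ ≤ r) : transition ψ b δ f g r = g r := by
  simp [transition, hψ1 _ ((one_le_div hδ).2 (le_sub_iff_add_le'.2 hr))]

theorem contDiff_transition {n : WithTop ℕ∞} {f g : ℝ → E} (hψ : ContDiff ℝ n ψ)
    (hf : ContDiff ℝ n f) (hg : ContDiff ℝ n g) (b δ : ℝ) :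
    ContDiff ℝ n (transition ψ b δ f g) := by
  have hcutoff : ContDiff ℝ n fun r => ψ ((r - b) / δ) := hψ.comp (by fun_prop)
  exact ((contDiff_const.sub hcutoff).smul hf).add (hcutoff.smul hg)

variable [CompleteSpace E] {f f' f'' g g' g'' : ℝ → E}

theorem doublePrimitive_transition_of_le (hψ0 : ∀ x ≤ 0, ψ x = 0) (hδ : 0 ≤ δ)
    (hf : ∀ x, HasDerivAt f (f' x) x) (hf' : ∀ x, HasDerivAt f' (f'' x) x)
    (hf'' : Continuous f'') (g'' : ℝ → E) (hr : r ≤ b) :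
    doublePrimitive (transition ψ b δ f'' g'') b (f b) (f' b) r = f r := by
  have hacc : Set.EqOn (transition ψ b δ f'' g'') f'' (Set.uIcc b r) := fun x hx =>
    transition_of_le hψ0 hδ _ _ (Set.uIcc_of_ge hr ▸ hx).2
  rw [doublePrimitive_congr hacc, doublePrimitive_eq_of_hasDerivAt (fun x _ => hf x)
    (fun x _ => hf' x) (hf''.intervalIntegrable _ _)]

theorem doublePrimitive_transition_of_ge (hψ1 : ∀ x, 1 ≤ x → ψ x = 1) (hδ : 0 < δ)
    (hg : ∀ x, HasDerivAt g (g' x) x) (hg' : ∀ x, HasDerivAt g' (g'' x) x)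
    (hg'' : Continuous g'') (f'' : ℝ → E) (hr : b + δ ≤ r) :
    doublePrimitive (transition ψ b δ f'' g'') (b + δ) (g (b + δ)) (g' (b + δ)) r = g r := by
  have hacc : Set.EqOn (transition ψ b δ f'' g'') g'' (Set.uIcc (b + δ) r) := fun x hx =>
    transition_of_ge hψ1 hδ _ _ (Set.uIcc_of_le hr ▸ hx).1
  rw [doublePrimitive_congr hacc, doublePrimitive_eq_of_hasDerivAt (fun x _ => hg x)
    (fun x _ => hg' x) (hg''.intervalIntegrable _ _)]

end Transition

theorem ite_le_eq_of_overlap {α β : Type*} [LinearOrder α] {p q s : α} {f₁ f₂ f₃ f₄ : α → β}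
    (hpq : p ≤ q) (h₁₂ : ∀ r ≤ p, f₁ r = f₂ r) (h₂₃ : ∀ r ≤ q, f₂ r = f₃ r)
    (h₃₄ : ∀ r, s ≤ r → f₃ r = f₄ r) (r : α) :
    (if r ≤ p then f₁ r else if r ≤ q then f₂ r else if r ≤ s then f₃ r else f₄ r) = f₃ r := by
  split_ifs with hp hq hs
  · rw [h₁₂ r hp, h₂₃ r (hp.trans hpq)]
  · exact h₂₃ r hq
  · rfl
  · exact (h₃₄ r (le_of_not_ge hs)).symm

section Profiles

theorem hasDerivAt_sin_mul_div {a : ℝ} (ha : a ≠ 0) (r : ℝ) :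
    HasDerivAt (fun r => sin (a * r) / a) (cos (a * r)) r := by
  simpa [ha] using ((hasDerivAt_id r).const_mul a).sin.div_const a

theorem hasDerivAt_cos_mul (a r : ℝ) :
    HasDerivAt (fun r => cos (a * r)) (-(a * sin (a * r))) r := by
  simpa [mul_comm] using ((hasDerivAt_id r).const_mul a).cos

theorem hasDerivAt_mul_sin_sub_sub_add (c ρ ζ ξ r : ℝ) :
    HasDerivAt (fun r => c * sin (r - ρ - ζ + ξ)) (c * cos (r - ρ - ζ + ξ)) r := by
  simpa using ((((hasDerivAt_id r).sub_const ρ).sub_const ζ).add_const ξ).sin.const_mul c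

theorem hasDerivAt_mul_cos_sub_sub_add (c ρ ζ ξ r : ℝ) :
    HasDerivAt (fun r => c * cos (r - ρ - ζ + ξ)) (-(c * sin (r - ρ - ζ + ξ))) r := by
  simpa using ((((hasDerivAt_id r).sub_const ρ).sub_const ζ).add_const ξ).cos.const_mul c

theorem abs_mul_cos_lt_one {c : ℝ} (hc : |c| < 1) (ξ : ℝ) : |c * cos ξ| < 1 := by
  rw [abs_mul]
  exact mul_lt_one_of_nonneg_of_lt_one_left (abs_nonneg c) hc (abs_cos_le_one ξ)

theorem sqrt_one_sub_sq_div_ne_zero {x y : ℝ} (hx : |x| < 1) (hy : y ≠ 0) :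
    √(1 - x ^ 2) / y ≠ 0 :=
  div_ne_zero (sqrt_pos.2 (sub_pos.2 ((sq_lt_one_iff_abs_lt_one x).2 hx))).ne' hy

theorem cos_mul_arccos_div {a x : ℝ} (ha : a ≠ 0) (hx : |x| ≤ 1) :
    cos (a * (arccos x / a)) = x := by
  rw [mul_div_cancel₀ _ ha, cos_arccos (abs_le.1 hx).1 (abs_le.1 hx).2]

theorem sin_mul_arccos_div_div {a x y : ℝ} (ha0 : a ≠ 0) (ha : a = √(1 - x ^ 2) / y)
    (hy : y ≠ 0) : sin (a * (arccos x / a)) / a = y := by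
  rw [mul_div_cancel₀ _ ha0, sin_arccos, div_eq_iff ha0, ha, mul_div_cancel₀ _ hy]

theorem doublePrimitive_transition_sin_of_ge {ψ : ℝ → ℝ} {ρ ζ r : ℝ}
    (hψ1 : ∀ x, 1 ≤ x → ψ x = 1) (hζ : 0 < ζ) (f'' : ℝ → ℝ) (c ξ : ℝ) (hr : ρ + ζ ≤ r) :
    doublePrimitive (transition ψ ρ ζ f'' fun t => -(c * sin (t - ρ - ζ + ξ))) (ρ + ζ)
      (c * sin ξ) (c * cos ξ) r = c * sin (r - ρ - ζ + ξ) := by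
  simpa using doublePrimitive_transition_of_ge hψ1 hζ (hasDerivAt_mul_sin_sub_sub_add c ρ ζ ξ)
    (hasDerivAt_mul_cos_sub_sub_add c ρ ζ ξ) (by fun_prop) f'' hr

end Profiles

theorem stmt6_general (n : ℕ∞) (c ξ : ℝ) (hs : c * sin ξ ≠ 0) (hlt : |c * cos ξ| < 1) (a ρ : ℝ)
    (ha : a = √(1 - c ^ 2 * cos ξ ^ 2) / (c * sin ξ)) (hρ : ρ = arccos (c * cos ξ) / a)
    (ψ : ℝ → ℝ) (hψ : ContDiff ℝ n ψ) (hψ0 : ∀ x : ℝ, x ≤ 0 → ψ x = 0)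
    (hψ1 : ∀ x : ℝ, 1 ≤ x → ψ x = 1) (ζ κ : ℝ) (hζ : 0 < ζ) (hκ : 0 < κ) (l : ℝ → ℝ)
    (hl : ∀ t : ℝ, l t = -((1 - ψ ((t - ρ) / ζ)) * a * sin (a * t)
      + ψ ((t - ρ) / ζ) * c * sin (t - ρ - ζ + ξ)))
    (φ₁ φ₂ φ₃ φ₄ : ℝ → ℝ) (hφ₁ : ∀ r : ℝ, φ₁ r = sin (a * r) / a)
    (hφ₂ : ∀ r : ℝ, φ₂ r = sin (a * ρ) / a + (r - ρ) * cos (a * ρ)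
      + ∫ s in ρ..r, (∫ t in ρ..s, l t))
    (hφ₃ : ∀ r : ℝ, φ₃ r = c * sin ξ + c * (r - ρ - ζ) * cos ξ
      + (1 - ψ ((r - (ρ + ζ)) / κ)) * (∫ s in ρ..r, (∫ t in ρ..s, l t))
      + ψ ((r - (ρ + ζ)) / κ) * (∫ s in (ρ + ζ)..r, (∫ t in (ρ + ζ)..s, l t))
      + (1 - ψ ((r - (ρ + ζ)) / κ)) * (c * ζ * cos ξ))
    (hφ₄ : ∀ r : ℝ, φ₄ r = c * sin (r - ρ - ζ + ξ)) (φ : ℝ → ℝ)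
    (hφ : ∀ r : ℝ, φ r =
      if r ≤ ρ then φ₁ r
      else if r ≤ ρ + ζ then φ₂ r
      else if r ≤ ρ + ζ + κ then φ₃ r
      else φ₄ r) :
    φ₁ ρ = φ₂ ρ ∧ φ₂ (ρ + ζ) = φ₃ (ρ + ζ) ∧ φ₃ (ρ + ζ + κ) = φ₄ (ρ + ζ + κ) ∧
      ContDiff ℝ n φ := by
  rw [← mul_pow] at ha
  have ha0 : a ≠ 0 := ha ▸ sqrt_one_sub_sq_div_ne_zero hlt hs
  have hcos : cos (a * ρ) = c * cos ξ := hρ ▸ cos_mul_arccos_div ha0 hlt.le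
  have hsin : sin (a * ρ) / a = c * sin ξ := hρ ▸ sin_mul_arccos_div_div ha0 ha hs
  have hl_trans : l = transition ψ ρ ζ (fun t => -(a * sin (a * t)))
      (fun t => -(c * sin (t - ρ - ζ + ξ))) := by
    funext t
    rw [hl, transition, smul_eq_mul, smul_eq_mul]
    ring
  have hφ₂_prim : φ₂ = doublePrimitive l ρ (sin (a * ρ) / a) (cos (a * ρ)) := funext hφ₂
  have hφ₃_trans : φ₃ = transition ψ (ρ + ζ) κ φ₂
      (doublePrimitive l (ρ + ζ) (c * sin ξ) (c * cos ξ)) := by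
    funext r
    simp only [hφ₃, transition, doublePrimitive, smul_eq_mul, hφ₂, hsin, hcos]
    ring
  have h₁₂ : ∀ r ≤ ρ, φ₁ r = φ₂ r := fun r hr => by
    rw [hφ₁, hφ₂_prim, hl_trans, doublePrimitive_transition_of_le hψ0 hζ.le
      (hasDerivAt_sin_mul_div ha0) (hasDerivAt_cos_mul a) (by fun_prop) _ hr]
  have h₂₃ : ∀ r ≤ ρ + ζ, φ₂ r = φ₃ r := fun r hr => by
    rw [hφ₃_trans, transition_of_le hψ0 hκ.le _ _ hr]
  have h₃₄ : ∀ r, ρ + ζ + κ ≤ r → φ₃ r = φ₄ r := fun r hr => by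
    rw [hφ₃_trans, transition_of_ge hψ1 hκ _ _ hr, hl_trans, doublePrimitive_transition_sin_of_ge
      hψ1 hζ _ _ _ ((le_add_of_nonneg_right hκ.le).trans hr), hφ₄]
  have hl_smooth : ContDiff ℝ n l :=
    hl_trans ▸ contDiff_transition hψ (by fun_prop) (by fun_prop) ρ ζ
  refine ⟨h₁₂ _ le_rfl, h₂₃ _ le_rfl, h₃₄ _ le_rfl, ?_⟩
  rw [funext fun r => (hφ r).trans
      (ite_le_eq_of_overlap (le_add_of_nonneg_right hζ.le) h₁₂ h₂₃ h₃₄ r), hφ₃_trans, hφ₂_prim]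
  exact contDiff_transition hψ (contDiff_doublePrimitive hl_smooth _ _ _)
    (contDiff_doublePrimitive hl_smooth _ _ _) _ _

/-- Smoothness of the glued warping function `φ = φ_{ξ,ζ,κ}`: the adjacent defining
formulas agree at the junction points `ρ`, `ρ+ζ`, `ρ+ζ+κ`, and the resulting
piecewise function is infinitely differentiable on `(0, ρ+ζ+π/2−ξ)`. -/
theorem stmt6 (c ξ : ℝ) (hc : c ∈ Set.Ioo (0 : ℝ) 1) (hξ : ξ ∈ Set.Ioo (0 : ℝ) 1)
    (a ρ : ℝ)
    (ha : a = Real.sqrt (1 - c ^ 2 * Real.cos ξ ^ 2) / (c * Real.sin ξ))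
    (hρ : ρ = Real.arccos (c * Real.cos ξ) / a)
    (ψ : ℝ → ℝ) (hψ : ContDiff ℝ (⊤ : ℕ∞) ψ)
    (hψ0 : ∀ x : ℝ, x ≤ 0 → ψ x = 0)
    (hψ1 : ∀ x : ℝ, 1 ≤ x → ψ x = 1)
    (hψb : ∀ x : ℝ, ψ x ∈ Set.Icc (0 : ℝ) 1)
    (ζ κ : ℝ) (hζ : 0 < ζ) (hκ : 0 < κ) (hκ' : κ < Real.pi / 2 - ξ)
    (l : ℝ → ℝ)
    (hl : ∀ t : ℝ, l t =
      -((1 - ψ ((t - ρ) / ζ)) * a * Real.sin (a * t)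
        + ψ ((t - ρ) / ζ) * c * Real.sin (t - ρ - ζ + ξ)))
    (φ₁ φ₂ φ₃ φ₄ : ℝ → ℝ)
    (hφ₁ : ∀ r : ℝ, φ₁ r = Real.sin (a * r) / a)
    (hφ₂ : ∀ r : ℝ, φ₂ r =
      Real.sin (a * ρ) / a + (r - ρ) * Real.cos (a * ρ)
        + ∫ s in ρ..r, (∫ t in ρ..s, l t))
    (hφ₃ : ∀ r : ℝ, φ₃ r =
      c * Real.sin ξ + c * (r - ρ - ζ) * Real.cos ξ
        + (1 - ψ ((r - (ρ + ζ)) / κ)) * (∫ s in ρ..r, (∫ t in ρ..s, l t))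
        + ψ ((r - (ρ + ζ)) / κ) * (∫ s in (ρ + ζ)..r, (∫ t in (ρ + ζ)..s, l t))
        + (1 - ψ ((r - (ρ + ζ)) / κ)) * (c * ζ * Real.cos ξ))
    (hφ₄ : ∀ r : ℝ, φ₄ r = c * Real.sin (r - ρ - ζ + ξ))
    (φ : ℝ → ℝ)
    (hφ : ∀ r : ℝ, φ r =
      if r ≤ ρ then φ₁ r
      else if r ≤ ρ + ζ then φ₂ r
      else if r ≤ ρ + ζ + κ then φ₃ r
      else φ₄ r) :
    φ₁ ρ = φ₂ ρ ∧
    φ₂ (ρ + ζ) = φ₃ (ρ + ζ) ∧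
    φ₃ (ρ + ζ + κ) = φ₄ (ρ + ζ + κ) ∧
    ContDiffOn ℝ (⊤ : ℕ∞) φ (Set.Ioo 0 (ρ + ζ + Real.pi / 2 - ξ)) := by
  have hsin : 0 < sin ξ := sin_pos_of_pos_of_lt_pi hξ.1 (by linarith [hξ.2, pi_gt_three])
  obtain ⟨h₁₂, h₂₃, h₃₄, hsmooth⟩ := stmt6_general ⊤ c ξ (mul_pos hc.1 hsin).ne'
    (abs_mul_cos_lt_one (abs_lt.2 ⟨by linarith [hc.1], hc.2⟩) ξ) a ρ ha hρ ψ hψ hψ0 hψ1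
    ζ κ hζ hκ l hl φ₁ φ₂ φ₃ φ₄ hφ₁ hφ₂ hφ₃ hφ₄ φ hφ
  exact ⟨h₁₂, h₂₃, h₃₄, hsmooth.contDiffOn⟩
end

section
/- Fix c ∈ (0,1) and ξ ∈ (0,1), and set a := √(1 − c²cos²ξ)/(c·sin ξ) and ρ := arccos(c·cos ξ)/a. Let ψ : ℝ → ℝ be a smooth function with ψ(x) = 0 for all x ≤ 0, ψ(x) = 1 for all x ≥ 1, and 0 ≤ ψ ≤ 1. For ζ > 0 and 0 < κ < π/2 − ξ define l and the glued warping function φ = φ_{ξ,ζ,κ} on [0, ρ+ζ+π/2−ξ] by: l(t) := −[(1 − ψ((t−ρ)/ζ))·a·sin(a t) + ψ((t−ρ)/ζ)·c·sin(t − ρ − ζ + ξ)]; φ(r) = sin(a r)/a for r ∈ [0, ρ]; φ(r) = sin(aρ)/a + (r−ρ)cos(aρ) + ∫_ρ^r ∫_ρ^s l(t) dt ds for r ∈ [ρ, ρ+ζ]; φ(r) = c·sin ξ + c(r−ρ−ζ)cos ξ + (1 − ψ((r−ρ−ζ)/κ))·∫_ρ^r ∫_ρ^s l(t) dt ds + ψ((r−ρ−ζ)/κ)·∫_{ρ+ζ}^r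 ∫_{ρ+ζ}^s l(t) dt ds + (1 − ψ((r−ρ−ζ)/κ))·cζ·cos ξ for r ∈ [ρ+ζ, ρ+ζ+κ]; φ(r) = c·sin(r−ρ−ζ+ξ) for r ∈ [ρ+ζ+κ, ρ+ζ+π/2−ξ]. Then there exists κ₀ ∈ (0, π/2 − ξ) such that for every κ ∈ (0, κ₀) there exists ζ₀ > 0 such that for every ζ ∈ (0, ζ₀) and every r ∈ (0, ρ+ζ+π/2−ξ): φ''(r) ≤ −(1−ξ)·φ(r) and (φ'(r))² + (1−ξ)·φ(r)² ≤ 1. -/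
open Real MeasureTheory intervalIntegral

/-!
Both curvature conditions are open in the `2`-jet of the warping function, and the suspension
profile satisfies them strictly: for every bound `k < 1`, its curvatures `1` and
`(1 - c² cos²) / (c² sin²) > 1` exceed `k`. The sphere profile and the suspension profile have the
same value and slope at `ρ`, so as `ζ → 0` the glued function tends, beyond `ρ`, to the suspension
profile translated by `ζ`: in value and slope on the interval of length `ζ`, and, for fixed `κ`, in
`C²` after it. On the short interval the second derivative itself need not converge, but it is an
average of values of both second derivatives near `ρ`, and that of the sphere profile is the smaller
one, because `a ≥ 1`. It is therefore almost bounded above by that of the suspension profile, which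
is all that the conditions, monotone in `φ''`, require.
-/

section SecondPrimitive

variable {E : Type*} [NormedAddCommGroup E] [NormedSpace ℝ E]

lemma contDiff_one_deriv {u : ℝ → E} (hu : ContDiff ℝ 2 u) : ContDiff ℝ 1 (deriv u) :=
  hu.deriv' (n := 1)

lemma sub_eq_sub_of_deriv_eqOn {u v : ℝ → E} (hu : Differentiable ℝ u) (hv : Differentiable ℝ v)
    {s : Set ℝ} (hs : Convex ℝ s) (h : Set.EqOn (deriv u) (deriv v) s) {b r : ℝ}
    (hb : b ∈ s) (hr : r ∈ s) : u r - v r = u b - v b := by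
  have hzero : ∀ x ∈ s, ‖deriv (fun y => u y - v y) x‖ ≤ 0 := fun x hx => by
    rw [deriv_fun_sub (hu x) (hv x), h hx, sub_self, norm_zero]
  have hle := hs.norm_image_sub_le_of_norm_deriv_le (fun x _ => (hu x).fun_sub (hv x)) hzero hb hr
  rw [zero_mul] at hle
  exact sub_eq_zero.1 (norm_le_zero_iff.1 hle)

lemma deriv_sub_deriv_eq_of_deriv_deriv_eqOn {u v : ℝ → E} (hu : ContDiff ℝ 2 u)
    (hv : ContDiff ℝ 2 v) {s : Set ℝ} (hs : Convex ℝ s)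
    (h : Set.EqOn (deriv (deriv u)) (deriv (deriv v)) s) {b r : ℝ} (hb : b ∈ s) (hr : r ∈ s) :
    deriv u r - deriv v r = deriv u b - deriv v b :=
  sub_eq_sub_of_deriv_eqOn hu.differentiable_deriv_two hv.differentiable_deriv_two hs h hb hr

lemma sub_eq_add_smul_of_deriv_deriv_eqOn {u v : ℝ → E} (hu : ContDiff ℝ 2 u)
    (hv : ContDiff ℝ 2 v) {s : Set ℝ} (hs : Convex ℝ s)
    (h : Set.EqOn (deriv (deriv u)) (deriv (deriv v)) s) {b r : ℝ} (hb : b ∈ s) (hr : r ∈ s) :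
    u r - v r = (u b - v b) + (r - b) • (deriv u b - deriv v b) := by
  set e := deriv u b - deriv v b with he
  have hw : ∀ x, HasDerivAt (fun y => v y + (y - b) • e) (deriv v x + e) x := fun x => by
    simpa using (hv.differentiable two_ne_zero x).hasDerivAt.fun_add
      (((hasDerivAt_id' x).sub_const b).smul_const e)
  have heq : Set.EqOn (deriv u) (deriv fun y => v y + (y - b) • e) s := fun x hx => by
    rw [(hw x).deriv, he, ← deriv_sub_deriv_eq_of_deriv_deriv_eqOn hu hv hs h hb hx]
    abel
  have := sub_eq_sub_of_deriv_eqOn (hu.differentiable two_ne_zero)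
    (fun x => (hw x).differentiableAt) hs heq hb hr
  rw [sub_self, zero_smul, add_zero, ← sub_sub, sub_eq_iff_eq_add] at this
  exact this

lemma norm_sub_le_mul_of_norm_deriv_le {u : ℝ → E} (hu : Differentiable ℝ u) {b h C : ℝ}
    (hC : ∀ x ∈ Set.Icc b (b + h), ‖deriv u x‖ ≤ C) {r : ℝ} (hr : r ∈ Set.Icc b (b + h)) :
    ‖u r - u b‖ ≤ C * h := by
  have hb : b ∈ Set.Icc b (b + h) := Set.left_mem_Icc.2 (hr.1.trans hr.2)
  refine ((convex_Icc b (b + h)).norm_image_sub_le_of_norm_deriv_le (fun x _ => hu x) hC hb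
    hr).trans (mul_le_mul_of_nonneg_left ?_ ((norm_nonneg _).trans (hC b hb)))
  rw [Real.norm_of_nonneg (sub_nonneg.2 hr.1)]
  exact sub_le_iff_le_add'.2 hr.2

lemma norm_deriv_sub_le_mul_of_norm_deriv_deriv_le {u : ℝ → E} (hu : ContDiff ℝ 2 u)
    {b h M : ℝ} (hM : ∀ x ∈ Set.Icc b (b + h), ‖deriv (deriv u) x‖ ≤ M) {r : ℝ}
    (hr : r ∈ Set.Icc b (b + h)) : ‖deriv u r - deriv u b‖ ≤ M * h :=
  norm_sub_le_mul_of_norm_deriv_le hu.differentiable_deriv_two hM hr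

lemma norm_sub_le_mul_of_norm_deriv_deriv_le {u : ℝ → E} (hu : ContDiff ℝ 2 u)
    {b h M : ℝ} (hM : ∀ x ∈ Set.Icc b (b + h), ‖deriv (deriv u) x‖ ≤ M) {r : ℝ}
    (hr : r ∈ Set.Icc b (b + h)) : ‖u r - u b‖ ≤ (‖deriv u b‖ + M * h) * h := by
  refine norm_sub_le_mul_of_norm_deriv_le (hu.differentiable two_ne_zero) (fun x hx => ?_) hr
  exact (norm_le_norm_add_norm_sub' _ _).trans
    (add_le_add_right (norm_deriv_sub_le_mul_of_norm_deriv_deriv_le hu hM hx) _)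

/-- The primitive of order two of `l` that vanishes to first order at `b`. -/
noncomputable def secondPrimitive (l : ℝ → E) (b r : ℝ) : E :=
  ∫ s in b..r, ∫ t in b..s, l t

variable [CompleteSpace E] {l : ℝ → E}

lemma deriv_secondPrimitive (hl : Continuous l) (b : ℝ) :
    deriv (secondPrimitive l b) = fun r => ∫ t in b..r, l t :=
  funext fun r => (continuous_primitive hl.intervalIntegrable b).deriv_integral _ b r

lemma deriv_deriv_secondPrimitive (hl : Continuous l) (b : ℝ) :
    deriv (deriv (secondPrimitive l b)) = l := by
  rw [deriv_secondPrimitive hl]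
  exact funext fun r => hl.deriv_integral _ b r

lemma contDiff_secondPrimitive (hl : Continuous l) (b : ℝ) :
    ContDiff ℝ 2 (secondPrimitive l b) := by
  have hfirst : ContDiff ℝ 1 (deriv (secondPrimitive l b)) := by
    rw [contDiff_one_iff_deriv, deriv_deriv_secondPrimitive hl, deriv_secondPrimitive hl]
    exact ⟨fun r => (hl.integral_hasStrictDerivAt b r).hasDerivAt.differentiableAt, hl⟩
  rw [← one_add_one_eq_two, contDiff_succ_iff_deriv]
  exact ⟨fun r => ((continuous_primitive hl.intervalIntegrable b).integral_hasStrictDerivAt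
    b r).hasDerivAt.differentiableAt, by simp, hfirst⟩

lemma eq_add_smul_add_secondPrimitive (hl : Continuous l) {u : ℝ → E} (hu : ContDiff ℝ 2 u)
    {b r : ℝ} (h : Set.EqOn (deriv (deriv u)) l (Set.uIcc b r)) :
    u r = u b + (r - b) • deriv u b + secondPrimitive l b r := by
  have hI : Set.EqOn (deriv (deriv u)) (deriv (deriv (secondPrimitive l b))) (Set.uIcc b r) := by
    rwa [deriv_deriv_secondPrimitive hl]
  have := sub_eq_add_smul_of_deriv_deriv_eqOn hu (contDiff_secondPrimitive hl b)
    (convex_uIcc b r) hI Set.left_mem_uIcc Set.right_mem_uIcc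
  rw [sub_eq_iff_eq_add] at this
  simpa [deriv_secondPrimitive hl, secondPrimitive] using this

end SecondPrimitive

section Blend

/-- A `C²` transition function: it stays in `[0, 1]`, vanishes on `(-∞, 0]` and equals `1` on
`[1, ∞)`. -/
structure IsCutoff (ψ : ℝ → ℝ) : Prop where
  contDiff : ContDiff ℝ 2 ψ
  eq_zero : ∀ x ≤ 0, ψ x = 0
  eq_one : ∀ x, 1 ≤ x → ψ x = 1
  mem_Icc : ∀ x, ψ x ∈ Set.Icc (0 : ℝ) 1

/-- The function that passes from `f` on the left of `b` to `g` on the right of `b + w`, with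
weights prescribed by the cutoff `ψ` in between. -/
noncomputable def blend (ψ : ℝ → ℝ) (b w : ℝ) (f g : ℝ → ℝ) (r : ℝ) : ℝ :=
  (1 - ψ ((r - b) / w)) * f r + ψ ((r - b) / w) * g r

variable {ψ : ℝ → ℝ} {b w r : ℝ} {f g : ℝ → ℝ}

lemma IsCutoff.blend_of_le (hψ : IsCutoff ψ) (hw : 0 ≤ w) (hr : r ≤ b) :
    blend ψ b w f g r = f r := by
  simp [blend, hψ.eq_zero _ (div_nonpos_of_nonpos_of_nonneg (sub_nonpos.2 hr) hw)]

lemma IsCutoff.blend_of_ge (hψ : IsCutoff ψ) (hw : 0 < w) (hr : b + w ≤ r) :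
    blend ψ b w f g r = g r := by
  simp [blend, hψ.eq_one _ ((one_le_div hw).2 (le_sub_iff_add_le'.2 hr))]

lemma IsCutoff.blend_mem (hψ : IsCutoff ψ) {s : Set ℝ} (hs : Convex ℝ s) (hf : f r ∈ s)
    (hg : g r ∈ s) : blend ψ b w f g r ∈ s :=
  have hmem := hψ.mem_Icc ((r - b) / w)
  hs hf hg (sub_nonneg.2 hmem.2) hmem.1 (sub_add_cancel _ _)

lemma IsCutoff.abs_blend_sub_le (hψ : IsCutoff ψ) {η : ℝ} (h : |f r - g r| ≤ η) :
    |blend ψ b w f g r - g r| ≤ η :=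
  hψ.blend_mem (convex_closedBall (g r) η) h
    (Metric.mem_closedBall_self ((abs_nonneg _).trans h))

lemma contDiff_blend {n : WithTop ℕ∞} (hψ : ContDiff ℝ n ψ) (hf : ContDiff ℝ n f)
    (hg : ContDiff ℝ n g) : ContDiff ℝ n (blend ψ b w f g) := by
  unfold blend
  fun_prop

lemma deriv_blend (hψ : Differentiable ℝ ψ) (hf : Differentiable ℝ f)
    (hg : Differentiable ℝ g) :
    deriv (blend ψ b w f g) r = blend ψ b w (deriv f) (deriv g) r +
      deriv (fun x => ψ (x / w)) (r - b) * (g r - f r) := by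
  have hχ : HasDerivAt (fun x => ψ ((x - b) / w)) (deriv (fun x => ψ (x / w)) (r - b)) r :=
    HasDerivAt.comp_sub_const r b
      (hψ.comp (differentiable_id.div_const w) (r - b)).hasDerivAt
  have := (((hχ.const_sub 1).mul (hf r).hasDerivAt).add (hχ.mul (hg r).hasDerivAt)).deriv
  simp only [blend]
  refine this.trans ?_
  ring

lemma deriv_deriv_blend (hψ : ContDiff ℝ 2 ψ) (hf : ContDiff ℝ 2 f) (hg : ContDiff ℝ 2 g) :
    deriv (deriv (blend ψ b w f g)) r = blend ψ b w (deriv (deriv f)) (deriv (deriv g)) r +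
      2 * deriv (fun x => ψ (x / w)) (r - b) * (deriv g r - deriv f r) +
      deriv (deriv fun x => ψ (x / w)) (r - b) * (g r - f r) := by
  have hψ' : Differentiable ℝ ψ := hψ.differentiable two_ne_zero
  have hf' : Differentiable ℝ f := hf.differentiable two_ne_zero
  have hg' : Differentiable ℝ g := hg.differentiable two_ne_zero
  have hfirst : deriv (blend ψ b w f g) = fun x => blend ψ b w (deriv f) (deriv g) x +
      deriv (fun x => ψ (x / w)) (x - b) * (g x - f x) :=
    funext fun _ => deriv_blend hψ' hf' hg'
  have hχ : HasDerivAt (fun x => deriv (fun x => ψ (x / w)) (x - b))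
      (deriv (deriv fun x => ψ (x / w)) (r - b)) r :=
    HasDerivAt.comp_sub_const r b
      (((hψ.comp (contDiff_id.div_const w)).differentiable_deriv_two) (r - b)).hasDerivAt
  have hblend : DifferentiableAt ℝ (blend ψ b w (deriv f) (deriv g)) r :=
    (contDiff_blend (n := 1) (hψ.of_le one_le_two) (contDiff_one_deriv hf)
      (contDiff_one_deriv hg)).differentiable one_ne_zero r
  have := (hblend.hasDerivAt.add
    (hχ.mul ((hg' r).hasDerivAt.fun_sub (hf' r).hasDerivAt))).deriv
  rw [hfirst]
  refine this.trans ?_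
  rw [deriv_blend hψ' hf.differentiable_deriv_two hg.differentiable_deriv_two]
  ring

lemma IsCutoff.hasCompactSupport_deriv_rescale (hψ : IsCutoff ψ) (hw : 0 < w) :
    HasCompactSupport (deriv fun x => ψ (x / w)) := by
  refine HasCompactSupport.intro (isCompact_Icc (a := 0) (b := w)) fun x hx => ?_
  rcases lt_or_ge x 0 with hneg | hnonneg
  · have : (fun y => ψ (y / w)) =ᶠ[nhds x] fun _ => 0 := by
      filter_upwards [Iio_mem_nhds hneg] with y hy
      exact hψ.eq_zero _ (div_nonpos_of_nonpos_of_nonneg (le_of_lt hy) hw.le)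
    rw [this.deriv_eq, deriv_const]
  · have : (fun y => ψ (y / w)) =ᶠ[nhds x] fun _ => 1 := by
      filter_upwards [Ioi_mem_nhds (not_le.1 fun h => hx ⟨hnonneg, h⟩)] with y hy
      exact hψ.eq_one _ ((one_le_div hw).2 (le_of_lt hy))
    rw [this.deriv_eq, deriv_const]

lemma IsCutoff.exists_abs_deriv_rescale_le (hψ : IsCutoff ψ) (hw : 0 < w) :
    ∃ B, ∀ x, |deriv (fun x => ψ (x / w)) x| ≤ B ∧ |deriv (deriv fun x => ψ (x / w)) x| ≤ B := by
  have hsupp := hψ.hasCompactSupport_deriv_rescale hw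
  have hcont : ContDiff ℝ 1 (deriv fun x => ψ (x / w)) :=
    contDiff_one_deriv (hψ.contDiff.comp (contDiff_id.div_const w))
  obtain ⟨B₁, hB₁⟩ := hcont.continuous.bounded_above_of_compact_support hsupp
  obtain ⟨B₂, hB₂⟩ := hcont.continuous_deriv_one.bounded_above_of_compact_support hsupp.deriv
  exact ⟨max B₁ B₂, fun x => ⟨(hB₁ x).trans (le_max_left _ _), (hB₂ x).trans (le_max_right _ _)⟩⟩

lemma IsCutoff.exists_blend_sub_le (hψ : IsCutoff ψ) (hw : 0 < w) :
    ∃ K > 0, ∀ {f g : ℝ → ℝ} {b r η : ℝ}, ContDiff ℝ 2 f → ContDiff ℝ 2 g →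
      |f r - g r| ≤ η → |deriv f r - deriv g r| ≤ η →
      |deriv (deriv f) r - deriv (deriv g) r| ≤ η →
      |blend ψ b w f g r - g r| ≤ K * η ∧ |deriv (blend ψ b w f g) r - deriv g r| ≤ K * η ∧
        |deriv (deriv (blend ψ b w f g)) r - deriv (deriv g) r| ≤ K * η := by
  obtain ⟨B, hB⟩ := hψ.exists_abs_deriv_rescale_le hw
  have hB0 : 0 ≤ B := (abs_nonneg _).trans (hB 0).1
  refine ⟨1 + 3 * B, by positivity, fun {f g b r η} hf hg h₀ h₁ h₂ => ?_⟩
  have hη : 0 ≤ η := (abs_nonneg _).trans h₀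
  obtain ⟨hB₁, hB₂⟩ := hB (r - b)
  have hmul : ∀ {x e : ℝ}, |x| ≤ B → |e| ≤ η → |x * e| ≤ B * η := fun hx he => by
    rw [abs_mul]
    gcongr
  have hb₀ := hψ.abs_blend_sub_le (b := b) (w := w) h₀
  have hb₁ := hψ.abs_blend_sub_le (b := b) (w := w) h₁
  have hb₂ := hψ.abs_blend_sub_le (b := b) (w := w) h₂
  rw [abs_sub_comm] at h₀ h₁
  have hBη : 0 ≤ B * η := mul_nonneg hB0 hη
  refine ⟨by linarith, ?_, ?_⟩
  · rw [deriv_blend (hψ.contDiff.differentiable two_ne_zero) (hf.differentiable two_ne_zero)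
      (hg.differentiable two_ne_zero), add_sub_right_comm]
    have := hmul hB₁ h₀
    exact (abs_add_le _ _).trans (by linarith)
  · rw [deriv_deriv_blend hψ.contDiff hf hg, mul_assoc, add_sub_right_comm, add_sub_right_comm]
    have hcross : |2 * (deriv (fun x => ψ (x / w)) (r - b) * (deriv g r - deriv f r))| ≤
        2 * (B * η) := by
      rw [abs_mul, abs_two]
      exact mul_le_mul_of_nonneg_left (hmul hB₁ h₁) zero_le_two
    have := hmul hB₂ h₀
    exact (abs_add_three _ _ _).trans (by linarith)

end Blend

section SmoothConcat

open scoped Topology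

/-- The second derivative that turns from `f''` at `ρ` to that of the translate `g (· - ζ)` at
`ρ + ζ`. -/
noncomputable def bridgeAccel (ψ f g : ℝ → ℝ) (ρ ζ : ℝ) : ℝ → ℝ :=
  blend ψ ρ ζ (deriv (deriv f)) fun t => deriv (deriv g) (t - ζ)

/-- The `C²` continuation of `f` beyond `ρ` whose second derivative is `bridgeAccel`. -/
noncomputable def bridge (ψ f g : ℝ → ℝ) (ρ ζ r : ℝ) : ℝ :=
  f ρ + (r - ρ) * deriv f ρ + secondPrimitive (bridgeAccel ψ f g ρ ζ) ρ r

/-- The `C²` smoothing of the concatenation of `f` on `(-∞, ρ]` and `g` on `[ρ, ∞)`: the second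
derivatives are joined on `[ρ, ρ + ζ]`, and the small discrepancy with `g (· - ζ)` that this
creates is cut off on `[ρ + ζ, ρ + ζ + κ]`. -/
noncomputable def smoothConcat (ψ f g : ℝ → ℝ) (ρ ζ κ : ℝ) : ℝ → ℝ :=
  blend ψ (ρ + ζ) κ (bridge ψ f g ρ ζ) fun r => g (r - ζ)

variable {ψ f g : ℝ → ℝ} {ρ ζ κ r : ℝ}

lemma deriv_deriv_comp_sub_const (u : ℝ → ℝ) (a x : ℝ) :
    deriv (deriv fun y => u (y - a)) x = deriv (deriv u) (x - a) := by
  simp only [funext fun y => deriv_comp_sub_const (f := u) a y, deriv_comp_sub_const]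

lemma continuous_deriv_deriv {u : ℝ → ℝ} (hu : ContDiff ℝ 2 u) : Continuous (deriv (deriv u)) :=
  (contDiff_one_deriv hu).continuous_deriv_one

lemma continuous_bridgeAccel (hψ : Continuous ψ) (hf : ContDiff ℝ 2 f) (hg : ContDiff ℝ 2 g) :
    Continuous (bridgeAccel ψ f g ρ ζ) := by
  have := continuous_deriv_deriv hf
  have := continuous_deriv_deriv hg
  unfold bridgeAccel blend
  fun_prop

lemma hasDerivAt_bridge (hψ : Continuous ψ) (hf : ContDiff ℝ 2 f) (hg : ContDiff ℝ 2 g) :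
    HasDerivAt (bridge ψ f g ρ ζ) (deriv f ρ + ∫ t in ρ..r, bridgeAccel ψ f g ρ ζ t) r := by
  have hl := continuous_bridgeAccel (ρ := ρ) (ζ := ζ) hψ hf hg
  have hsecond := ((contDiff_secondPrimitive hl ρ).differentiable two_ne_zero r).hasDerivAt
  rw [deriv_secondPrimitive hl] at hsecond
  have hline := (((hasDerivAt_id' r).sub_const ρ).mul_const (deriv f ρ)).const_add (f ρ)
  rw [one_mul] at hline
  exact hline.fun_add hsecond

lemma bridge_self : bridge ψ f g ρ ζ ρ = f ρ := by
  simp [bridge, secondPrimitive]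

lemma deriv_bridge_self (hψ : Continuous ψ) (hf : ContDiff ℝ 2 f) (hg : ContDiff ℝ 2 g) :
    deriv (bridge ψ f g ρ ζ) ρ = deriv f ρ := by
  simp [(hasDerivAt_bridge hψ hf hg).deriv]

lemma deriv_deriv_bridge (hψ : Continuous ψ) (hf : ContDiff ℝ 2 f) (hg : ContDiff ℝ 2 g) :
    deriv (deriv (bridge ψ f g ρ ζ)) = bridgeAccel ψ f g ρ ζ := by
  have hfirst : deriv (bridge ψ f g ρ ζ) =
      fun x => deriv f ρ + ∫ t in ρ..x, bridgeAccel ψ f g ρ ζ t :=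
    funext fun _ => (hasDerivAt_bridge hψ hf hg).deriv
  rw [hfirst, deriv_const_add']
  exact funext ((continuous_bridgeAccel hψ hf hg).deriv_integral _ ρ)

lemma contDiff_bridge (hψ : Continuous ψ) (hf : ContDiff ℝ 2 f) (hg : ContDiff ℝ 2 g) :
    ContDiff ℝ 2 (bridge ψ f g ρ ζ) := by
  have := contDiff_secondPrimitive (continuous_bridgeAccel (ρ := ρ) (ζ := ζ) hψ hf hg) ρ
  unfold bridge
  fun_prop

lemma IsCutoff.bridgeAccel_of_le (hψ : IsCutoff ψ) (hζ : 0 ≤ ζ) (hr : r ≤ ρ) :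
    bridgeAccel ψ f g ρ ζ r = deriv (deriv f) r :=
  hψ.blend_of_le hζ hr

lemma IsCutoff.bridgeAccel_of_ge (hψ : IsCutoff ψ) (hζ : 0 < ζ) (hr : ρ + ζ ≤ r) :
    bridgeAccel ψ f g ρ ζ r = deriv (deriv g) (r - ζ) :=
  hψ.blend_of_ge hζ hr

lemma IsCutoff.deriv_deriv_bridge_of_ge (hψ : IsCutoff ψ) (hf : ContDiff ℝ 2 f)
    (hg : ContDiff ℝ 2 g) (hζ : 0 < ζ) (hr : ρ + ζ ≤ r) :
    deriv (deriv (bridge ψ f g ρ ζ)) r = deriv (deriv fun x => g (x - ζ)) r := by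
  rw [deriv_deriv_bridge hψ.contDiff.continuous hf hg, hψ.bridgeAccel_of_ge hζ hr,
    deriv_deriv_comp_sub_const]

lemma IsCutoff.bridge_of_le (hψ : IsCutoff ψ) (hf : ContDiff ℝ 2 f) (hg : ContDiff ℝ 2 g)
    (hζ : 0 ≤ ζ) (hr : r ≤ ρ) : bridge ψ f g ρ ζ r = f r :=
  (eq_add_smul_add_secondPrimitive (continuous_bridgeAccel hψ.contDiff.continuous hf hg) hf
    fun _ ht => (hψ.bridgeAccel_of_le hζ (Set.uIcc_of_ge hr ▸ ht).2).symm).symm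

lemma IsCutoff.deriv_bridge_of_le (hψ : IsCutoff ψ) (hf : ContDiff ℝ 2 f)
    (hg : ContDiff ℝ 2 g) (hζ : 0 ≤ ζ) (hr : r ≤ ρ) :
    deriv (bridge ψ f g ρ ζ) r = deriv f r := by
  have hψc := hψ.contDiff.continuous
  have heq : Set.EqOn (deriv (deriv (bridge ψ f g ρ ζ))) (deriv (deriv f)) (Set.Iic ρ) :=
    fun t ht => by rw [deriv_deriv_bridge hψc hf hg, hψ.bridgeAccel_of_le hζ ht]
  have := deriv_sub_deriv_eq_of_deriv_deriv_eqOn (contDiff_bridge hψc hf hg) hf (convex_Iic ρ)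
    heq Set.self_mem_Iic hr
  rwa [deriv_bridge_self hψc hf hg, sub_self, sub_eq_zero] at this

lemma IsCutoff.smoothConcat_eq_ite (hψ : IsCutoff ψ) (hf : ContDiff ℝ 2 f)
    (hg : ContDiff ℝ 2 g) (hζ : 0 < ζ) (hκ : 0 < κ) :
    smoothConcat ψ f g ρ ζ κ r =
      if r ≤ ρ then f r
      else if r ≤ ρ + ζ then bridge ψ f g ρ ζ r
      else if r ≤ ρ + ζ + κ then
        (1 - ψ ((r - (ρ + ζ)) / κ)) * bridge ψ f g ρ ζ r + ψ ((r - (ρ + ζ)) / κ) *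
          (g ρ + (r - (ρ + ζ)) * deriv g ρ +
            secondPrimitive (bridgeAccel ψ f g ρ ζ) (ρ + ζ) r)
      else g (r - ζ) := by
  split_ifs with h₁ h₂ h₃
  · rw [smoothConcat, hψ.blend_of_le hκ.le (by linarith), hψ.bridge_of_le hf hg hζ.le h₁]
  · rw [smoothConcat, hψ.blend_of_le hκ.le h₂]
  · have hg' : ContDiff ℝ 2 fun x => g (x - ζ) := hg.comp (contDiff_id.sub contDiff_const)
    have := eq_add_smul_add_secondPrimitive (b := ρ + ζ) (r := r)
      (continuous_bridgeAccel hψ.contDiff.continuous hf hg) hg' fun t ht => by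
        rw [Set.uIcc_of_le (not_le.1 h₂).le] at ht
        rw [deriv_deriv_comp_sub_const, hψ.bridgeAccel_of_ge hζ ht.1]
    rw [deriv_comp_sub_const, add_sub_cancel_right, smul_eq_mul] at this
    rw [smoothConcat, blend, this]
  · rw [smoothConcat, hψ.blend_of_ge hκ (not_le.1 h₃).le]

lemma IsCutoff.smoothConcat_eventuallyEq_bridge (hψ : IsCutoff ψ) (hκ : 0 ≤ κ)
    (hr : r < ρ + ζ) : smoothConcat ψ f g ρ ζ κ =ᶠ[nhds r] bridge ψ f g ρ ζ := by
  filter_upwards [Iio_mem_nhds hr] with x hx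
  exact hψ.blend_of_le hκ (le_of_lt hx)

lemma IsCutoff.exists_abs_bridgeAccel_le (hψ : IsCutoff ψ) (hf : ContDiff ℝ 2 f)
    (hg : ContDiff ℝ 2 g) (ρ : ℝ) :
    ∃ M, ∀ ζ ∈ Set.Ioc (0 : ℝ) 1, ∀ t ∈ Set.Icc ρ (ρ + ζ), |bridgeAccel ψ f g ρ ζ t| ≤ M := by
  have hI : IsCompact (Set.Icc (ρ - 1) (ρ + 1)) := isCompact_Icc
  obtain ⟨M₁, hM₁⟩ := hI.exists_bound_of_continuousOn (continuous_deriv_deriv hf).continuousOn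
  obtain ⟨M₂, hM₂⟩ := hI.exists_bound_of_continuousOn (continuous_deriv_deriv hg).continuousOn
  refine ⟨max M₁ M₂, fun ζ hζ t ht => abs_le.2 (hψ.blend_mem (convex_Icc _ _) ?_ ?_)⟩
  · exact abs_le.1 ((hM₁ t ⟨by linarith [ht.1], by linarith [ht.2, hζ.2]⟩).trans
      (le_max_left _ _))
  · exact abs_le.1 ((hM₂ (t - ζ) ⟨by linarith [ht.1, hζ.2], by linarith [ht.2]⟩).trans
      (le_max_right _ _))

lemma IsCutoff.exists_bridge_sub_le (hψ : IsCutoff ψ) (hf : ContDiff ℝ 2 f)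
    (hg : ContDiff ℝ 2 g) (ρ : ℝ) :
    ∃ C, ∀ ζ ∈ Set.Ioc (0 : ℝ) 1, ∀ r ∈ Set.Icc ρ (ρ + ζ),
      |bridge ψ f g ρ ζ r - f ρ| ≤ C * ζ ∧
        |deriv (bridge ψ f g ρ ζ) r - deriv f ρ| ≤ C * ζ := by
  obtain ⟨M, hM⟩ := hψ.exists_abs_bridgeAccel_le hf hg ρ
  refine ⟨|deriv f ρ| + M, fun ζ hζ r hr => ?_⟩
  have hψc := hψ.contDiff.continuous
  have hy : ContDiff ℝ 2 (bridge ψ f g ρ ζ) := contDiff_bridge hψc hf hg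
  have hM0 : 0 ≤ M := (abs_nonneg _).trans (hM ζ hζ r hr)
  have haccel : ∀ x ∈ Set.Icc ρ (ρ + ζ), ‖deriv (deriv (bridge ψ f g ρ ζ)) x‖ ≤ M := by
    rw [deriv_deriv_bridge hψc hf hg]
    exact hM ζ hζ
  have h₀ := norm_sub_le_mul_of_norm_deriv_deriv_le hy haccel hr
  have h₁ := norm_deriv_sub_le_mul_of_norm_deriv_deriv_le hy haccel hr
  simp only [bridge_self, deriv_bridge_self hψc hf hg, Real.norm_eq_abs] at h₀ h₁
  refine ⟨h₀.trans ?_, h₁.trans ?_⟩ <;> refine mul_le_mul_of_nonneg_right ?_ hζ.1.le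
  · exact add_le_add_right (mul_le_of_le_one_right hM0 hζ.2) _
  · exact le_add_of_nonneg_left (abs_nonneg _)

lemma IsCutoff.eventually_bridge_near (hψ : IsCutoff ψ) (hf : ContDiff ℝ 2 f)
    (hg : ContDiff ℝ 2 g) (ρ : ℝ) {ε : ℝ} (hε : 0 < ε) :
    ∀ᶠ ζ in 𝓝[>] 0, ∀ r ∈ Set.Icc ρ (ρ + ζ),
      |bridge ψ f g ρ ζ r - f ρ| ≤ ε ∧ |deriv (bridge ψ f g ρ ζ) r - deriv f ρ| ≤ ε := by
  obtain ⟨C, hC⟩ := hψ.exists_bridge_sub_le hf hg ρ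
  have hsmall : ∀ᶠ ζ in 𝓝[>] (0 : ℝ), C * ζ < ε :=
    eventually_nhdsWithin_of_eventually_nhds
      ((continuous_const_mul C).tendsto' 0 0 (mul_zero C) |>.eventually_lt_const hε)
  filter_upwards [Ioc_mem_nhdsGT one_pos, hsmall] with ζ hζ hCζ r hr
  exact ⟨(hC ζ hζ r hr).1.trans hCζ.le, (hC ζ hζ r hr).2.trans hCζ.le⟩

lemma IsCutoff.eventually_bridgeAccel_le (hψ : IsCutoff ψ) (hf : ContDiff ℝ 2 f)
    (hg : ContDiff ℝ 2 g) (h : deriv (deriv f) ρ ≤ deriv (deriv g) ρ) {ε : ℝ} (hε : 0 < ε) :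
    ∀ᶠ ζ in 𝓝[>] 0, ∀ r ∈ Set.Icc ρ (ρ + ζ),
      bridgeAccel ψ f g ρ ζ r ≤ deriv (deriv g) ρ + ε := by
  have hf' : ∀ᶠ x in 𝓝 ρ, deriv (deriv f) x < deriv (deriv g) ρ + ε :=
    (continuous_deriv_deriv hf).continuousAt.eventually_lt_const (by linarith)
  have hg' : ∀ᶠ x in 𝓝 ρ, deriv (deriv g) x < deriv (deriv g) ρ + ε :=
    (continuous_deriv_deriv hg).continuousAt.eventually_lt_const (by linarith)
  obtain ⟨η, hη, hball⟩ := Metric.eventually_nhds_iff_ball.1 (hf'.and hg')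
  filter_upwards [Ioo_mem_nhdsGT hη] with ζ hζ r hr
  rw [Real.ball_eq_Ioo] at hball
  refine hψ.blend_mem (convex_Iic _) (hball r ?_).1.le (hball (r - ζ) ?_).2.le <;>
    constructor <;> linarith [hr.1, hr.2, hζ.1, hζ.2]

lemma IsCutoff.eventually_bridge_near_translate (hψ : IsCutoff ψ) (hf : ContDiff ℝ 2 f)
    (hg : ContDiff ℝ 2 g) (h₀ : f ρ = g ρ) (h₁ : deriv f ρ = deriv g ρ) (R : ℝ) {ε : ℝ}
    (hε : 0 < ε) :
    ∀ᶠ ζ in 𝓝[>] 0, ∀ r ∈ Set.Icc (ρ + ζ) (R + ζ),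
      |bridge ψ f g ρ ζ r - g (r - ζ)| ≤ ε ∧
        |deriv (bridge ψ f g ρ ζ) r - deriv g (r - ζ)| ≤ ε := by
  have hψc := hψ.contDiff.continuous
  have hL : 0 < 1 + |R - ρ| := by positivity
  filter_upwards [hψ.eventually_bridge_near hf hg ρ (div_pos hε hL), self_mem_nhdsWithin]
    with ζ hnear hζ r hr
  obtain ⟨hd₀, hd₁⟩ := hnear (ρ + ζ) (Set.right_mem_Icc.2 (le_add_of_nonneg_right (le_of_lt hζ)))
  have hg' : ContDiff ℝ 2 fun x => g (x - ζ) := hg.comp (contDiff_id.sub contDiff_const)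
  have heq : Set.EqOn (deriv (deriv (bridge ψ f g ρ ζ))) (deriv (deriv fun x => g (x - ζ)))
      (Set.Ici (ρ + ζ)) := fun _ ht => hψ.deriv_deriv_bridge_of_ge hf hg hζ ht
  have hdiff₀ := sub_eq_add_smul_of_deriv_deriv_eqOn (contDiff_bridge hψc hf hg) hg'
    (convex_Ici _) heq Set.self_mem_Ici hr.1
  have hdiff₁ := deriv_sub_deriv_eq_of_deriv_deriv_eqOn (contDiff_bridge hψc hf hg) hg'
    (convex_Ici _) heq Set.self_mem_Ici hr.1
  simp only [deriv_comp_sub_const, add_sub_cancel_right, ← h₀, ← h₁, smul_eq_mul]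
    at hdiff₀ hdiff₁
  have hlen : |r - (ρ + ζ)| ≤ |R - ρ| :=
    abs_le_abs_of_nonneg (sub_nonneg.2 hr.1) (by linarith [hr.2])
  rw [hdiff₀, hdiff₁]
  constructor
  · calc _ ≤ ε / (1 + |R - ρ|) + |R - ρ| * (ε / (1 + |R - ρ|)) := by
          refine (abs_add_le _ _).trans (add_le_add hd₀ ?_)
          rw [abs_mul]
          gcongr
      _ = ε := by field_simp
  · exact hd₁.trans (div_le_self hε.le (le_add_of_nonneg_right (abs_nonneg _)))

/-- `φ` is `ε`-close at `r` to the `2`-jet of `g` at `x`, where the second derivative is only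
compared from above. -/
def JetNear (ε : ℝ) (φ : ℝ → ℝ) (r : ℝ) (g : ℝ → ℝ) (x : ℝ) : Prop :=
  |φ r - g x| ≤ ε ∧ |deriv φ r - deriv g x| ≤ ε ∧ deriv (deriv φ) r ≤ deriv (deriv g) x + ε

lemma IsCutoff.eventually_jetNear_smoothConcat_of_lt (hψ : IsCutoff ψ) (hf : ContDiff ℝ 2 f)
    (hg : ContDiff ℝ 2 g) (h₀ : f ρ = g ρ) (h₁ : deriv f ρ = deriv g ρ)
    (h₂ : deriv (deriv f) ρ ≤ deriv (deriv g) ρ) (hκ : 0 ≤ κ) {ε : ℝ} (hε : 0 < ε) :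
    ∀ᶠ ζ in 𝓝[>] 0, ∀ r ∈ Set.Ico ρ (ρ + ζ),
      JetNear ε (smoothConcat ψ f g ρ ζ κ) r g ρ := by
  filter_upwards [hψ.eventually_bridge_near hf hg ρ hε,
    hψ.eventually_bridgeAccel_le hf hg h₂ hε] with ζ hnear haccel r hr
  have heq := hψ.smoothConcat_eventuallyEq_bridge (f := f) (g := g) hκ hr.2
  have hr' := Set.Ico_subset_Icc_self hr
  rw [JetNear, heq.eq_of_nhds, heq.deriv_eq, heq.deriv.deriv_eq,
    deriv_deriv_bridge hψ.contDiff.continuous hf hg, ← h₀, ← h₁]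
  exact ⟨(hnear r hr').1, (hnear r hr').2, haccel r hr'⟩

lemma IsCutoff.eventually_jetNear_smoothConcat_of_ge (hψ : IsCutoff ψ) (hf : ContDiff ℝ 2 f)
    (hg : ContDiff ℝ 2 g) (h₀ : f ρ = g ρ) (h₁ : deriv f ρ = deriv g ρ) (hκ : 0 < κ) (R : ℝ)
    {ε : ℝ} (hε : 0 < ε) :
    ∀ᶠ ζ in 𝓝[>] 0, ∀ r ∈ Set.Icc (ρ + ζ) (R + ζ),
      JetNear ε (smoothConcat ψ f g ρ ζ κ) r g (r - ζ) := by
  obtain ⟨K, hK, hblend⟩ := hψ.exists_blend_sub_le hκ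
  filter_upwards [hψ.eventually_bridge_near_translate hf hg h₀ h₁ R (div_pos hε hK),
    self_mem_nhdsWithin] with ζ hnear hζ r hr
  have hg' : ContDiff ℝ 2 fun x => g (x - ζ) := hg.comp (contDiff_id.sub contDiff_const)
  obtain ⟨hφ₀, hφ₁, hφ₂⟩ := hblend (b := ρ + ζ)
    (contDiff_bridge hψ.contDiff.continuous hf hg) hg' (hnear r hr).1
    (by rw [deriv_comp_sub_const]; exact (hnear r hr).2)
    (by rw [hψ.deriv_deriv_bridge_of_ge hf hg hζ hr.1, sub_self, abs_zero]; positivity)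
  rw [mul_div_cancel₀ _ hK.ne'] at hφ₀ hφ₁ hφ₂
  rw [deriv_comp_sub_const] at hφ₁
  rw [deriv_deriv_comp_sub_const] at hφ₂
  exact ⟨hφ₀, hφ₁, sub_le_iff_le_add'.1 (le_of_abs_le hφ₂)⟩

lemma IsCutoff.eventually_exists_jetNear_smoothConcat (hψ : IsCutoff ψ) (hf : ContDiff ℝ 2 f)
    (hg : ContDiff ℝ 2 g) (h₀ : f ρ = g ρ) (h₁ : deriv f ρ = deriv g ρ)
    (h₂ : deriv (deriv f) ρ ≤ deriv (deriv g) ρ) (hκ : 0 < κ) {R : ℝ} (hR : ρ ≤ R) {ε : ℝ}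
    (hε : 0 < ε) :
    ∀ᶠ ζ in 𝓝[>] 0, ∀ r ∈ Set.Icc ρ (R + ζ), ∃ x ∈ Set.Icc ρ R,
      JetNear ε (smoothConcat ψ f g ρ ζ κ) r g x := by
  filter_upwards [hψ.eventually_jetNear_smoothConcat_of_lt hf hg h₀ h₁ h₂ hκ.le hε,
    hψ.eventually_jetNear_smoothConcat_of_ge hf hg h₀ h₁ hκ R hε] with ζ hlt hge r hr
  rcases lt_or_ge r (ρ + ζ) with h | h
  · exact ⟨ρ, Set.left_mem_Icc.2 hR, hlt r ⟨hr.1, h⟩⟩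
  · exact ⟨r - ζ, ⟨by linarith, by linarith [hr.2]⟩, hge r ⟨h, hr.2⟩⟩

/-- The pointwise inequalities on the warping function `φ` which say that the sectional curvatures
`-φ'' / φ` and `(1 - φ' ^ 2) / φ ^ 2` of `dr² + φ² dθ²` at radius `r` are at least `k`. -/
def CurvatureGE (k : ℝ) (φ : ℝ → ℝ) (r : ℝ) : Prop :=
  deriv (deriv φ) r ≤ -k * φ r ∧ deriv φ r ^ 2 + k * φ r ^ 2 ≤ 1

/-- The strict version of `CurvatureGE`. -/
def CurvatureGT (k : ℝ) (φ : ℝ → ℝ) (r : ℝ) : Prop :=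
  deriv (deriv φ) r < -k * φ r ∧ deriv φ r ^ 2 + k * φ r ^ 2 < 1

lemma exists_curvatureGE_of_jetNear {k : ℝ} (hg : ContDiff ℝ 2 g) {s : Set ℝ} (hs : IsCompact s)
    (h : ∀ x ∈ s, CurvatureGT k g x) :
    ∃ ε > 0, ∀ (φ : ℝ → ℝ) (r : ℝ), ∀ x ∈ s, JetNear ε φ r g x → CurvatureGE k φ r := by
  have hg₀ : Continuous g := hg.continuous
  have hg₁ : Continuous (deriv g) := (contDiff_one_deriv hg).continuous
  have := continuous_deriv_deriv hg
  have hstable : ∀ᶠ e : ℝ × ℝ × ℝ in 𝓝 0, ∀ x ∈ s,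
      deriv (deriv g) x + e.2.2 < -k * (g x + e.1) ∧
        (deriv g x + e.2.1) ^ 2 + k * (g x + e.1) ^ 2 < 1 := by
    refine hs.eventually_forall_of_forall_eventually fun x hx => ?_
    refine (ContinuousAt.eventually_lt (by fun_prop) (by fun_prop) ?_).and
      (ContinuousAt.eventually_lt (by fun_prop) continuousAt_const ?_)
    · simpa using (h x hx).1
    · simpa using (h x hx).2
  obtain ⟨ε, hε, hball⟩ := Metric.nhds_basis_closedBall.eventually_iff.1 hstable
  refine ⟨ε, hε, fun φ r x hx ⟨h₀, h₁, h₂⟩ => ?_⟩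
  have hmem : (φ r - g x, deriv φ r - deriv g x, ε) ∈ Metric.closedBall (0 : ℝ × ℝ × ℝ) ε := by
    simp [Prod.norm_def, h₀, h₁, abs_of_pos hε]
  have hlt := hball hmem x hx
  simp only [add_sub_cancel] at hlt
  exact ⟨h₂.trans hlt.1.le, hlt.2.le⟩

lemma IsCutoff.curvatureGE_smoothConcat_of_le {k : ℝ} (hψ : IsCutoff ψ) (hf : ContDiff ℝ 2 f)
    (hg : ContDiff ℝ 2 g) (hζ : 0 < ζ) (hκ : 0 ≤ κ) (hr : r ≤ ρ) (h : CurvatureGE k f r) :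
    CurvatureGE k (smoothConcat ψ f g ρ ζ κ) r := by
  have heq := hψ.smoothConcat_eventuallyEq_bridge (f := f) (g := g) hκ
    (hr.trans_lt (lt_add_of_pos_right ρ hζ))
  rw [CurvatureGE, heq.eq_of_nhds, heq.deriv_eq, heq.deriv.deriv_eq,
    hψ.bridge_of_le hf hg hζ.le hr, hψ.deriv_bridge_of_le hf hg hζ.le hr,
    deriv_deriv_bridge hψ.contDiff.continuous hf hg, hψ.bridgeAccel_of_le hζ.le hr]
  exact h

theorem IsCutoff.eventually_curvatureGE_smoothConcat {k R : ℝ} (hψ : IsCutoff ψ)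
    (hf : ContDiff ℝ 2 f) (hg : ContDiff ℝ 2 g) (h₀ : f ρ = g ρ) (h₁ : deriv f ρ = deriv g ρ)
    (h₂ : deriv (deriv f) ρ ≤ deriv (deriv g) ρ) (hκ : 0 < κ) (hR : ρ ≤ R) {s : Set ℝ}
    (hfk : ∀ r ∈ s, r ≤ ρ → CurvatureGE k f r)
    (hgk : ∀ x ∈ Set.Icc ρ R, CurvatureGT k g x) :
    ∀ᶠ ζ in 𝓝[>] 0, ∀ r ∈ s, r ≤ R + ζ → CurvatureGE k (smoothConcat ψ f g ρ ζ κ) r := by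
  obtain ⟨ε, hε, hjet⟩ := exists_curvatureGE_of_jetNear hg isCompact_Icc hgk
  filter_upwards [hψ.eventually_exists_jetNear_smoothConcat hf hg h₀ h₁ h₂ hκ hR hε,
    self_mem_nhdsWithin] with ζ hnear hζ r hrs hr
  rcases le_total r ρ with h | h
  · exact hψ.curvatureGE_smoothConcat_of_le hf hg hζ hκ.le h (hfk r hrs h)
  · obtain ⟨x, hx, hrx⟩ := hnear r ⟨h, hr⟩
    exact hjet _ r x hx hrx

end SmoothConcat

section Profiles

/-- The warping function of the round sphere of curvature `a ^ 2`. -/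
noncomputable def sphereProfile (a r : ℝ) : ℝ := sin (a * r) / a

/-- The warping function of the spherical suspension over a sphere of radius `c`, with its vertex
at `-τ`. -/
noncomputable def suspensionProfile (c τ x : ℝ) : ℝ := c * sin (x + τ)

variable {a c k τ r : ℝ}

lemma contDiff_sphereProfile {n : WithTop ℕ∞} : ContDiff ℝ n (sphereProfile a) := by
  unfold sphereProfile
  fun_prop

lemma contDiff_suspensionProfile {n : WithTop ℕ∞} : ContDiff ℝ n (suspensionProfile c τ) := by
  unfold suspensionProfile
  fun_prop

lemma deriv_sphereProfile (ha : a ≠ 0) : deriv (sphereProfile a) = fun r => cos (a * r) := by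
  funext r
  have := (((hasDerivAt_id' r).const_mul a).sin.div_const a).deriv
  rwa [mul_one, mul_div_cancel_right₀ _ ha] at this

lemma deriv_deriv_sphereProfile (ha : a ≠ 0) :
    deriv (deriv (sphereProfile a)) r = -(a * sin (a * r)) := by
  rw [deriv_sphereProfile ha, ((hasDerivAt_id' r).const_mul a).cos.deriv]
  ring

lemma deriv_suspensionProfile :
    deriv (suspensionProfile c τ) = fun x => c * cos (x + τ) := by
  funext x
  have := (((hasDerivAt_id' x).add_const τ).sin.const_mul c).deriv
  rwa [mul_one] at this

lemma deriv_deriv_suspensionProfile :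
    deriv (deriv (suspensionProfile c τ)) r = -(c * sin (r + τ)) := by
  rw [deriv_suspensionProfile, (((hasDerivAt_id' r).add_const τ).cos.const_mul c).deriv]
  ring

lemma curvatureGE_sphereProfile (ha : 1 ≤ a) (hk : k ≤ 1) (hr : 0 ≤ sin (a * r)) :
    CurvatureGE k (sphereProfile a) r := by
  have ha₀ : 0 < a := zero_lt_one.trans_le ha
  have hka : k ≤ a ^ 2 := hk.trans (one_le_pow₀ ha)
  constructor
  · rw [deriv_deriv_sphereProfile ha₀.ne', neg_mul, neg_le_neg_iff]
    calc k * sphereProfile a r ≤ a ^ 2 * (sin (a * r) / a) :=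
          mul_le_mul_of_nonneg_right hka (div_nonneg hr ha₀.le)
      _ = a * sin (a * r) := by field_simp
  · rw [deriv_sphereProfile ha₀.ne']
    calc cos (a * r) ^ 2 + k * sphereProfile a r ^ 2
        ≤ cos (a * r) ^ 2 + a ^ 2 * (sin (a * r) / a) ^ 2 :=
          add_le_add_right (mul_le_mul_of_nonneg_right hka (sq_nonneg _)) _
      _ = 1 := by rw [div_pow, mul_div_cancel₀ _ (pow_ne_zero 2 ha₀.ne'), cos_sq_add_sin_sq]

lemma curvatureGT_suspensionProfile (hc : 0 < c) (hc' : c < 1) (hk : k < 1)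
    (hr : 0 < sin (r + τ)) : CurvatureGT k (suspensionProfile c τ) r := by
  have hg : 0 < c * sin (r + τ) := mul_pos hc hr
  constructor
  · rw [deriv_deriv_suspensionProfile, neg_mul, neg_lt_neg_iff]
    exact mul_lt_of_lt_one_left hg hk
  · rw [deriv_suspensionProfile]
    calc (c * cos (r + τ)) ^ 2 + k * suspensionProfile c τ r ^ 2
        ≤ (c * cos (r + τ)) ^ 2 + 1 * (c * sin (r + τ)) ^ 2 :=
          add_le_add_right (mul_le_mul_of_nonneg_right hk.le (sq_nonneg _)) _
      _ = c ^ 2 := by rw [one_mul, mul_pow, mul_pow, ← mul_add, cos_sq_add_sin_sq, mul_one]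
      _ < 1 := pow_lt_one₀ hc.le hc' two_ne_zero

end Profiles

section GluedWarpingFunction

open scoped Topology

variable {ψ : ℝ → ℝ} {a c ξ ρ ζ κ r : ℝ}

lemma bridgeAccel_sphereProfile_suspensionProfile (ha : a ≠ 0) :
    bridgeAccel ψ (sphereProfile a) (suspensionProfile c (ξ - ρ)) ρ ζ = fun t =>
      -((1 - ψ ((t - ρ) / ζ)) * a * sin (a * t) +
        ψ ((t - ρ) / ζ) * c * sin (t - ρ - ζ + ξ)) := by
  funext t
  rw [bridgeAccel, blend, deriv_deriv_sphereProfile ha, deriv_deriv_suspensionProfile,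
    show t - ζ + (ξ - ρ) = t - ρ - ζ + ξ by ring]
  ring

lemma IsCutoff.smoothConcat_sphereProfile_suspensionProfile_eq_ite (hψ : IsCutoff ψ) (ha : a ≠ 0)
    (hsin : sin (a * ρ) / a = c * sin ξ) (hcos : cos (a * ρ) = c * cos ξ) (hζ : 0 < ζ)
    (hκ : 0 < κ) {l : ℝ → ℝ}
    (hl : l = bridgeAccel ψ (sphereProfile a) (suspensionProfile c (ξ - ρ)) ρ ζ) :
    smoothConcat ψ (sphereProfile a) (suspensionProfile c (ξ - ρ)) ρ ζ κ r =
      if r ≤ ρ then sin (a * r) / a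
      else if r ≤ ρ + ζ then
        sin (a * ρ) / a + (r - ρ) * cos (a * ρ) + ∫ s in ρ..r, ∫ t in ρ..s, l t
      else if r ≤ ρ + ζ + κ then
        c * sin ξ + c * (r - ρ - ζ) * cos ξ
          + (1 - ψ ((r - (ρ + ζ)) / κ)) * (∫ s in ρ..r, ∫ t in ρ..s, l t)
          + ψ ((r - (ρ + ζ)) / κ) * (∫ s in (ρ + ζ)..r, ∫ t in (ρ + ζ)..s, l t)
          + (1 - ψ ((r - (ρ + ζ)) / κ)) * (c * ζ * cos ξ)
      else c * sin (r - ρ - ζ + ξ) := by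
  rw [hψ.smoothConcat_eq_ite contDiff_sphereProfile contDiff_suspensionProfile hζ hκ]
  simp only [bridge, secondPrimitive, ← hl, deriv_sphereProfile ha, deriv_suspensionProfile,
    sphereProfile, suspensionProfile, add_sub_cancel]
  split_ifs
  · rfl
  · rfl
  · rw [hsin, hcos]
    ring
  · ring_nf

lemma one_le_sqrt_div_mul_sin (hc : c ∈ Set.Ioo (0 : ℝ) 1) (hξ : 0 < sin ξ) :
    1 ≤ √(1 - c ^ 2 * cos ξ ^ 2) / (c * sin ξ) := by
  refine (one_le_div (mul_pos hc.1 hξ)).2 (le_sqrt_of_sq_le ?_)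
  rw [le_sub_iff_add_le, mul_pow, ← mul_add, sin_sq_add_cos_sq, mul_one]
  exact pow_le_one₀ hc.1.le hc.2.le

lemma cos_arccos_mul_cos (hc : c ∈ Set.Ioo (0 : ℝ) 1) :
    cos (arccos (c * cos ξ)) = c * cos ξ := by
  have habs : |c * cos ξ| ≤ 1 := by
    rw [abs_mul, abs_of_pos hc.1]
    exact mul_le_one₀ hc.2.le (abs_nonneg _) (abs_cos_le_one ξ)
  exact cos_arccos (abs_le.1 habs).1 (abs_le.1 habs).2

lemma sin_arccos_mul_cos_div (hc : c ∈ Set.Ioo (0 : ℝ) 1) (hξ : 0 < sin ξ)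
    (ha : a = √(1 - c ^ 2 * cos ξ ^ 2) / (c * sin ξ)) :
    sin (arccos (c * cos ξ)) / a = c * sin ξ := by
  have ha₀ : a ≠ 0 := (zero_lt_one.trans_le (ha ▸ one_le_sqrt_div_mul_sin hc hξ)).ne'
  rw [div_eq_iff ha₀, sin_arccos, mul_pow, ha, mul_div_cancel₀ _ (mul_pos hc.1 hξ).ne']

theorem IsCutoff.eventually_curvatureGE_smoothConcat_profiles {k : ℝ} (hψ : IsCutoff ψ)
    (hc : c ∈ Set.Ioo (0 : ℝ) 1) (hξ : ξ ∈ Set.Ioo 0 (π / 2)) (hk : k < 1) (ha : 1 ≤ a)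
    (haρ : a * ρ ≤ π) (hsin : sin (a * ρ) / a = c * sin ξ) (hcos : cos (a * ρ) = c * cos ξ)
    (hκ : 0 < κ) :
    ∀ᶠ ζ in 𝓝[>] 0, ∀ r ∈ Set.Ioi 0, r ≤ ρ + (π / 2 - ξ) + ζ →
      CurvatureGE k
        (smoothConcat ψ (sphereProfile a) (suspensionProfile c (ξ - ρ)) ρ ζ κ) r := by
  have ha₀ : 0 < a := zero_lt_one.trans_le ha
  have hsinξ : 0 < c * sin ξ := mul_pos hc.1
    (sin_pos_of_pos_of_lt_pi hξ.1 (by linarith [hξ.2, pi_pos]))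
  refine hψ.eventually_curvatureGE_smoothConcat contDiff_sphereProfile
    contDiff_suspensionProfile ?_ ?_ ?_ hκ (by linarith [hξ.2]) (fun r hr hrρ => ?_)
    fun x hx => ?_
  · rw [sphereProfile, suspensionProfile, add_sub_cancel, hsin]
  · simp only [deriv_sphereProfile ha₀.ne', deriv_suspensionProfile, add_sub_cancel, hcos]
  · rw [deriv_deriv_sphereProfile ha₀.ne', deriv_deriv_suspensionProfile, add_sub_cancel,
      neg_le_neg_iff, (div_eq_iff ha₀.ne').1 hsin, mul_left_comm]
    exact le_mul_of_one_le_right hsinξ.le (one_le_mul_of_one_le_of_one_le ha ha)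
  · exact curvatureGE_sphereProfile ha hk.le (sin_nonneg_of_nonneg_of_le_pi
      (mul_pos ha₀ hr).le ((mul_le_mul_of_nonneg_left hrρ ha₀.le).trans haρ))
  · exact curvatureGT_suspensionProfile hc.1 hc.2 hk (sin_pos_of_pos_of_lt_pi
      (by linarith [hx.1, hξ.1]) (by linarith [hx.2, pi_pos]))

end GluedWarpingFunction

theorem stmt7_general (c ξ k : ℝ) (hc : c ∈ Set.Ioo (0 : ℝ) 1) (hξ : ξ ∈ Set.Ioo 0 (π / 2))
    (hk : k < 1) (a ρ : ℝ) (ha : a = √(1 - c ^ 2 * cos ξ ^ 2) / (c * sin ξ))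
    (hρ : ρ = arccos (c * cos ξ) / a) (ψ : ℝ → ℝ) (hψ : IsCutoff ψ) (l : ℝ → ℝ → ℝ)
    (hl : ∀ ζ t : ℝ, l ζ t = -((1 - ψ ((t - ρ) / ζ)) * a * sin (a * t)
      + ψ ((t - ρ) / ζ) * c * sin (t - ρ - ζ + ξ)))
    (φ : ℝ → ℝ → ℝ → ℝ)
    (hφ : ∀ ζ κ r : ℝ, φ ζ κ r =
      if r ≤ ρ then sin (a * r) / a
      else if r ≤ ρ + ζ then
        sin (a * ρ) / a + (r - ρ) * cos (a * ρ) + ∫ s in ρ..r, ∫ t in ρ..s, l ζ t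
      else if r ≤ ρ + ζ + κ then
        c * sin ξ + c * (r - ρ - ζ) * cos ξ
          + (1 - ψ ((r - (ρ + ζ)) / κ)) * (∫ s in ρ..r, ∫ t in ρ..s, l ζ t)
          + ψ ((r - (ρ + ζ)) / κ) * (∫ s in (ρ + ζ)..r, ∫ t in (ρ + ζ)..s, l ζ t)
          + (1 - ψ ((r - (ρ + ζ)) / κ)) * (c * ζ * cos ξ)
      else c * sin (r - ρ - ζ + ξ))
    (κ : ℝ) (hκ : 0 < κ) :
    ∃ ζ₀ : ℝ, 0 < ζ₀ ∧ ∀ ζ : ℝ, 0 < ζ → ζ < ζ₀ → ∀ r ∈ Set.Ioo 0 (ρ + ζ + π / 2 - ξ),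
      deriv (deriv (φ ζ κ)) r ≤ -k * φ ζ κ r ∧
        (deriv (φ ζ κ) r) ^ 2 + k * (φ ζ κ r) ^ 2 ≤ 1 := by
  have hsinξ : 0 < sin ξ := sin_pos_of_pos_of_lt_pi hξ.1 (by linarith [hξ.2, pi_pos])
  have ha₁ : 1 ≤ a := ha ▸ one_le_sqrt_div_mul_sin hc hsinξ
  have ha₀ : a ≠ 0 := (zero_lt_one.trans_le ha₁).ne'
  have haρ : a * ρ = arccos (c * cos ξ) := by rw [hρ, mul_div_cancel₀ _ ha₀]
  have hsin : sin (a * ρ) / a = c * sin ξ := haρ ▸ sin_arccos_mul_cos_div hc hsinξ ha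
  have hcos : cos (a * ρ) = c * cos ξ := haρ ▸ cos_arccos_mul_cos hc
  obtain ⟨ζ₀, hζ₀, hcurv⟩ := mem_nhdsGT_iff_exists_Ioo_subset.1
    (hψ.eventually_curvatureGE_smoothConcat_profiles hc hξ hk ha₁ (haρ ▸ arccos_le_pi _)
      hsin hcos hκ)
  refine ⟨ζ₀, hζ₀, fun ζ hζ hζζ₀ r hr => ?_⟩
  have hφ_eq : φ ζ κ =
      smoothConcat ψ (sphereProfile a) (suspensionProfile c (ξ - ρ)) ρ ζ κ := by
    funext x
    rw [hφ, hψ.smoothConcat_sphereProfile_suspensionProfile_eq_ite ha₀ hsin hcos hζ hκ]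
    exact (funext (hl ζ)).trans (bridgeAccel_sphereProfile_suspensionProfile ha₀).symm
  rw [hφ_eq]
  exact hcurv ⟨hζ, hζζ₀⟩ r hr.1 (by linarith [hr.2])

/-- The Claim in Proposition 5.1: for each fixed `ξ` and all sufficiently small `κ`
and `ζ ≪ κ`, the glued warping function `φ = φ_{ξ,ζ,κ}` satisfies
`φ'' ≤ −(1−ξ)φ` and `(φ')² + (1−ξ)φ² ≤ 1` on `(0, ρ+ζ+π/2−ξ)`. -/
theorem stmt7 (c ξ : ℝ) (hc : c ∈ Set.Ioo (0 : ℝ) 1) (hξ : ξ ∈ Set.Ioo (0 : ℝ) 1)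
    (a ρ : ℝ)
    (ha : a = Real.sqrt (1 - c ^ 2 * Real.cos ξ ^ 2) / (c * Real.sin ξ))
    (hρ : ρ = Real.arccos (c * Real.cos ξ) / a)
    (ψ : ℝ → ℝ) (hψ : ContDiff ℝ (⊤ : ℕ∞) ψ)
    (hψ0 : ∀ x : ℝ, x ≤ 0 → ψ x = 0)
    (hψ1 : ∀ x : ℝ, 1 ≤ x → ψ x = 1)
    (hψb : ∀ x : ℝ, ψ x ∈ Set.Icc (0 : ℝ) 1)
    (l : ℝ → ℝ → ℝ)
    (hl : ∀ ζ t : ℝ, l ζ t =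
      -((1 - ψ ((t - ρ) / ζ)) * a * Real.sin (a * t)
        + ψ ((t - ρ) / ζ) * c * Real.sin (t - ρ - ζ + ξ)))
    (φ : ℝ → ℝ → ℝ → ℝ)
    (hφ : ∀ ζ κ r : ℝ, φ ζ κ r =
      if r ≤ ρ then Real.sin (a * r) / a
      else if r ≤ ρ + ζ then
        Real.sin (a * ρ) / a + (r - ρ) * Real.cos (a * ρ)
          + ∫ s in ρ..r, (∫ t in ρ..s, l ζ t)
      else if r ≤ ρ + ζ + κ then
        c * Real.sin ξ + c * (r - ρ - ζ) * Real.cos ξ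
          + (1 - ψ ((r - (ρ + ζ)) / κ)) * (∫ s in ρ..r, (∫ t in ρ..s, l ζ t))
          + ψ ((r - (ρ + ζ)) / κ) * (∫ s in (ρ + ζ)..r, (∫ t in (ρ + ζ)..s, l ζ t))
          + (1 - ψ ((r - (ρ + ζ)) / κ)) * (c * ζ * Real.cos ξ)
      else c * Real.sin (r - ρ - ζ + ξ)) :
    ∃ κ₀ : ℝ, 0 < κ₀ ∧ κ₀ < Real.pi / 2 - ξ ∧
      ∀ κ : ℝ, 0 < κ → κ < κ₀ →
        ∃ ζ₀ : ℝ, 0 < ζ₀ ∧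
          ∀ ζ : ℝ, 0 < ζ → ζ < ζ₀ →
            ∀ r ∈ Set.Ioo (0 : ℝ) (ρ + ζ + Real.pi / 2 - ξ),
              deriv (deriv (φ ζ κ)) r ≤ -(1 - ξ) * φ ζ κ r ∧
              (deriv (φ ζ κ) r) ^ 2 + (1 - ξ) * (φ ζ κ r) ^ 2 ≤ 1 :=
  ⟨(π / 2 - ξ) / 2, by linarith [hξ.2, pi_gt_three], by linarith [hξ.2, pi_gt_three],
    fun κ hκ _ => stmt7_general c ξ (1 - ξ) hc ⟨hξ.1, by linarith [hξ.2, pi_gt_three]⟩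
      (by linarith [hξ.1]) a ρ ha hρ ψ ⟨contDiff_infty.1 hψ 2, hψ0, hψ1, hψb⟩ l hl
      φ hφ κ hκ⟩
end

section
/- Let n ≥ 2 be an integer and c ∈ (0,1], and let α := (−n + √(n² − 4(n−1)(1 − 1/c²)))/2, so that α ≥ 0 and α² + nα + (n−1)(1 − 1/c²) = 0. Then for every r ∈ (0, π): (i) the function u(r) := (sin r)^{1+α} satisfies u''(r) + (n−1)(cos r/sin r)·u'(r) − ((n−1)/(c²·sin²r))·u(r) = −(α + 1 + (n−1)/c²)·u(r); and (ii) the function v(r) := cos r satisfies v''(r) + (n−1)(cos r/sin r)·v'(r) = −n·v(r). -/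
open Real

/-!
Write `L F = F'' + (n - 1) cot r F'`. Then
`L (sin ^ p) = p (p + n - 2) sin ^ (p - 2) - p (p + n - 1) sin ^ p`, so the potential `μ / sin ^ 2`
cancels the singular term exactly when `p` solves the indicial equation `p (p + n - 2) = μ`, and the
eigenvalue left over is `p (p + n - 1) = p + μ`. For `p = 1 + α` and `μ = (n - 1) / c ^ 2` the
indicial equation is the quadratic equation of which `α` is the larger root.
-/

section QuadraticRoot

variable {b q x : ℝ}

theorem quadratic_eq_zero_of_eq_larger_root (hbq : 0 ≤ b ^ 2 - 4 * q)
    (hx : x = (-b + √(b ^ 2 - 4 * q)) / 2) : x ^ 2 + b * x + q = 0 := by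
  have hdiscrim : discrim 1 b q = √(b ^ 2 - 4 * q) * √(b ^ 2 - 4 * q) := by
    rw [mul_self_sqrt hbq, discrim, mul_one]
  have hroot := (quadratic_eq_zero_iff one_ne_zero hdiscrim x).2 (Or.inl (by rw [hx, mul_one]))
  linear_combination hroot

theorem larger_root_nonneg (hq : q ≤ 0) : 0 ≤ (-b + √(b ^ 2 - 4 * q)) / 2 := by
  have hb : b ≤ √(b ^ 2 - 4 * q) := le_sqrt_of_sq_le (by linarith)
  linarith

end QuadraticRoot

theorem football_discrim_nonneg {n : ℝ} (hn : 1 ≤ n) (c : ℝ) :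
    0 ≤ n ^ 2 - 4 * ((n - 1) * (1 - 1 / c ^ 2)) := by
  have hμ : 0 ≤ (n - 1) / c ^ 2 := div_nonneg (sub_nonneg.2 hn) (sq_nonneg c)
  calc
    0 ≤ (n - 2) ^ 2 + 4 * ((n - 1) / c ^ 2) :=
      add_nonneg (sq_nonneg _) (mul_nonneg zero_le_four hμ)
    _ = n ^ 2 - 4 * ((n - 1) * (1 - 1 / c ^ 2)) := by ring

theorem one_sub_one_div_sq_nonpos {c : ℝ} (hc : c ≠ 0) (hc₁ : |c| ≤ 1) : 1 - 1 / c ^ 2 ≤ 0 :=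
  sub_nonpos.2 (one_le_one_div (by positivity) ((sq_le_one_iff_abs_le_one c).2 hc₁))

section SinPower

variable (p : ℝ) {r : ℝ}

theorem hasDerivAt_sin_rpow (hr : sin r ≠ 0) :
    HasDerivAt (fun s ↦ sin s ^ p) (p * (cos r * sin r ^ (p - 1))) r :=
  ((hasDerivAt_sin r).rpow_const (Or.inl hr)).congr_deriv (by ring)

theorem deriv_deriv_sin_rpow (hr : sin r ≠ 0) :
    deriv (deriv fun s ↦ sin s ^ p) r =
      p * (-sin r * sin r ^ (p - 1) + cos r * ((p - 1) * (cos r * sin r ^ (p - 1 - 1)))) := by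
  have hderiv : deriv (fun s ↦ sin s ^ p) =ᶠ[nhds r] fun s ↦ p * (cos s * sin s ^ (p - 1)) := by
    filter_upwards [continuous_sin.continuousAt.eventually_ne hr] with s hs
    exact (hasDerivAt_sin_rpow p hs).deriv
  rw [hderiv.deriv_eq]
  exact (((hasDerivAt_cos r).mul (hasDerivAt_sin_rpow (p - 1) hr)).const_mul p).deriv

end SinPower

/-- The radial part `F'' + (n - 1) cot r F'` of the Laplacian of a metric `dr² + c² sin² r dθ²` in
dimension `n`. The dimension enters only as a coefficient and is allowed to be any real number. -/
noncomputable def radialLaplacian (n : ℝ) (F : ℝ → ℝ) (r : ℝ) : ℝ :=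
  deriv (deriv F) r + (n - 1) * (cos r / sin r) * deriv F r

theorem radialLaplacian_cos (n : ℝ) {r : ℝ} (hr : sin r ≠ 0) :
    radialLaplacian n (fun s ↦ cos s) r = -n * cos r := by
  have hderiv₂ : deriv (fun s ↦ -sin s) r = -cos r := (hasDerivAt_sin r).neg.deriv
  rw [radialLaplacian, deriv_cos', hderiv₂]
  field_simp
  ring

theorem radialLaplacian_sin_rpow (n p : ℝ) {r : ℝ} (hr : sin r ≠ 0) :
    radialLaplacian n (fun s ↦ sin s ^ p) r =
      p * (p + n - 2) * sin r ^ (p - 2) - p * (p + n - 1) * sin r ^ p := by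
  have hpow₁ : sin r ^ (p - 1) = sin r ^ (p - 2) * sin r := by
    rw [← rpow_add_one hr]
    ring_nf
  have hpow : sin r ^ p = sin r ^ (p - 2) * sin r ^ 2 := by
    rw [← rpow_add_natCast hr, Nat.cast_ofNat, sub_add_cancel]
  have hexp : p - 1 - 1 = p - 2 := by ring
  rw [radialLaplacian, deriv_deriv_sin_rpow p hr, (hasDerivAt_sin_rpow p hr).deriv, hexp, hpow₁,
    hpow]
  field_simp
  linear_combination p * (p + n - 2) * sin r ^ (p - 2) * sin_sq_add_cos_sq r

theorem radialLaplacian_sin_rpow_sub_of_indicial {n p μ r : ℝ} (hμ : p * (p + n - 2) = μ)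
    (hr : sin r ≠ 0) :
    radialLaplacian n (fun s ↦ sin s ^ p) r - μ / sin r ^ 2 * sin r ^ p =
      -(p + μ) * sin r ^ p := by
  have hpow : sin r ^ (p - 2) = sin r ^ p / sin r ^ 2 := by
    rw [← rpow_sub_natCast hr, Nat.cast_ofNat]
  rw [radialLaplacian_sin_rpow n p hr, hpow, ← hμ]
  ring

theorem stmt8_general {n c α : ℝ} (hn : 1 ≤ n) (hc : c ≠ 0)
    (hα : α = (-n + √(n ^ 2 - 4 * (n - 1) * (1 - 1 / c ^ 2))) / 2) :
    (|c| ≤ 1 → 0 ≤ α) ∧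
    α ^ 2 + n * α + (n - 1) * (1 - 1 / c ^ 2) = 0 ∧
    ∀ r ∈ Set.Ioo 0 π,
      (deriv (deriv fun s ↦ sin s ^ (1 + α)) r
          + (n - 1) * (cos r / sin r) * deriv (fun s ↦ sin s ^ (1 + α)) r
          - (n - 1) / (c ^ 2 * sin r ^ 2) * sin r ^ (1 + α)
        = -(α + 1 + (n - 1) / c ^ 2) * sin r ^ (1 + α)) ∧
      (deriv (deriv fun s ↦ cos s) r + (n - 1) * (cos r / sin r) * deriv (fun s ↦ cos s) r
        = -n * cos r) := by
  rw [mul_assoc] at hα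
  have hquad := quadratic_eq_zero_of_eq_larger_root (football_discrim_nonneg hn c) hα
  have hindicial : (1 + α) * (1 + α + n - 2) = (n - 1) / c ^ 2 := by
    linear_combination hquad
  refine ⟨fun hc₁ ↦ ?_, hquad, fun r hr ↦ ?_⟩
  · rw [hα]
    exact larger_root_nonneg
      (mul_nonpos_of_nonneg_of_nonpos (sub_nonneg.2 hn) (one_sub_one_div_sq_nonpos hc hc₁))
  · have hsin : sin r ≠ 0 := (sin_pos_of_mem_Ioo hr).ne'
    refine ⟨?_, radialLaplacian_cos n hsin⟩
    rw [← div_div, add_comm α 1]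
    exact radialLaplacian_sin_rpow_sub_of_indicial hindicial hsin

/-- Radial eigenfunction ODE identities on the football metric
`g_c = dr² + c² sin²r dθ²`: with `α = (−n + √(n² − 4(n−1)(1 − 1/c²)))/2` one has
`α ≥ 0`, `α² + nα + (n−1)(1 − 1/c²) = 0`, and for all `r ∈ (0, π)` the functions
`u(r) = (sin r)^{1+α}` and `v(r) = cos r` satisfy the stated radial ODEs. -/
theorem stmt8 (n : ℕ) (hn : 2 ≤ n) (c : ℝ) (hc : c ∈ Set.Ioc (0 : ℝ) 1)
    (α : ℝ)
    (hα : α = (-(n : ℝ) + Real.sqrt ((n : ℝ) ^ 2 - 4 * ((n : ℝ) - 1) * (1 - 1 / c ^ 2))) / 2) :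
    0 ≤ α ∧
    α ^ 2 + (n : ℝ) * α + ((n : ℝ) - 1) * (1 - 1 / c ^ 2) = 0 ∧
    ∀ r ∈ Set.Ioo (0 : ℝ) Real.pi,
      (deriv (deriv (fun s : ℝ => Real.sin s ^ ((1 : ℝ) + α))) r
          + ((n : ℝ) - 1) * (Real.cos r / Real.sin r)
            * deriv (fun s : ℝ => Real.sin s ^ ((1 : ℝ) + α)) r
          - (((n : ℝ) - 1) / (c ^ 2 * Real.sin r ^ 2)) * Real.sin r ^ ((1 : ℝ) + α)
        = -(α + 1 + ((n : ℝ) - 1) / c ^ 2) * Real.sin r ^ ((1 : ℝ) + α)) ∧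
      (deriv (deriv (fun s : ℝ => Real.cos s)) r
          + ((n : ℝ) - 1) * (Real.cos r / Real.sin r) * deriv (fun s : ℝ => Real.cos s) r
        = -(n : ℝ) * Real.cos r) := by
  obtain ⟨hnonneg, hquad, hode⟩ := stmt8_general (by exact_mod_cast one_le_two.trans hn) hc.1.ne' hα
  exact ⟨hnonneg ((abs_of_pos hc.1).trans_le hc.2), hquad, hode⟩
end

section
/- Let n ≥ 1 be an integer, A > 0, B > 0, α > 0, and let w ∈ ℝⁿ be a unit vector. Define G : (0, π/2) → ℝ^{n+1} by G(r) = (A·cos r, B·(sin r)^{1+α}·w). Then G(r) ≠ 0 for every r ∈ (0, π/2), the map r ↦ G(r)/‖G(r)‖ is differentiable on (0, π/2), and the norm of its derivative tends to 0 as r → 0⁺. -/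
open Real Filter

/-!
At the pole both `cos r` and `sin r ^ (1 + α)` have derivative zero, the latter because the
exponent exceeds one. So the curve `G` is `C¹` near `0` with `G 0 ≠ 0` and `G' 0 = 0`.
Normalization is smooth away from the origin, hence `G / ‖G‖` is `C¹` near `0` too, and by the
chain rule its derivative vanishes at `0`; the limit is then the continuity of this derivative.
-/

open Set Topology NormedSpace

section Calculus

variable {𝕜 E F : Type*} [NontriviallyNormedField 𝕜] [NormedAddCommGroup E] [NormedSpace 𝕜 E]
  [NormedAddCommGroup F] [NormedSpace 𝕜 F]

lemma continuousAt_deriv_of_contDiffAt {f : 𝕜 → E} {t : 𝕜} (hf : ContDiffAt 𝕜 1 f t) :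
    ContinuousAt (deriv f) t :=
  (hf.continuousAt_fderiv one_ne_zero).clm_apply continuousAt_const

lemma hasDerivAt_zero_comp {f : 𝕜 → E} {g : E → F} {t : 𝕜} (hg : DifferentiableAt 𝕜 g (f t))
    (hf : HasDerivAt f 0 t) : HasDerivAt (g ∘ f) 0 t := by
  simpa only [map_zero] using hg.hasFDerivAt.comp_hasDerivAt t hf

lemma tendsto_deriv_comp_of_hasDerivAt_zero {f : 𝕜 → E} {g : E → F} {t : 𝕜}
    (hg : ContDiffAt 𝕜 1 g (f t)) (hf : ContDiffAt 𝕜 1 f t) (hf' : HasDerivAt f 0 t) :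
    Tendsto (deriv (g ∘ f)) (𝓝 t) (𝓝 0) := by
  have hderiv : deriv (g ∘ f) t = 0 :=
    (hasDerivAt_zero_comp (hg.differentiableAt one_ne_zero) hf').deriv
  simpa only [hderiv] using (continuousAt_deriv_of_contDiffAt (hg.comp t hf)).tendsto

end Calculus

lemma contDiffAt_normalize {E : Type*} [NormedAddCommGroup E] [InnerProductSpace ℝ E]
    {m : WithTop ℕ∞} {x : E} (hx : x ≠ 0) : ContDiffAt ℝ m (normalize : E → E) x :=
  ((contDiffAt_norm ℝ hx).inv (norm_ne_zero_iff.2 hx)).smul contDiffAt_id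

section Module

variable {E : Type*} [AddCommGroup E] [Module ℝ E]

/-- The radial profile of the first eigenfunctions of the football metric, with the cross-section
coordinate frozen and the amplitudes absorbed into the vectors `a` and `b`. It is meant for
`r ∈ [0, π]`; elsewhere the power of a negative sine has the conventional value of `Real.rpow`. -/
noncomputable def footballCurve (α : ℝ) (a b : E) (r : ℝ) : E :=
  cos r • a + sin r ^ (1 + α) • b

lemma footballCurve_zero {α : ℝ} (hα : 1 + α ≠ 0) (a b : E) : footballCurve α a b 0 = a := by
  simp [footballCurve, zero_rpow hα]

lemma footballCurve_ne_zero {a b : E} (hab : LinearIndependent ℝ ![a, b]) (α : ℝ) {r : ℝ}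
    (hr : r ∈ Ioo 0 π) : footballCurve α a b r ≠ 0 := fun h =>
  (rpow_pos_of_pos (sin_pos_of_mem_Ioo hr) (1 + α)).ne' (LinearIndependent.pair_iff.1 hab _ _ h).2

end Module

section NormedSpace

variable {E : Type*} [NormedAddCommGroup E] [NormedSpace ℝ E] {α : ℝ}

lemma contDiff_footballCurve (hα : 0 ≤ α) (a b : E) : ContDiff ℝ 1 (footballCurve α a b) := by
  have hsin : ContDiff ℝ 1 fun r => sin r ^ (1 + α) := by
    exact_mod_cast (contDiff_sin (n := (1 : ℕ))).rpow_const_of_le (by simpa using hα)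
  exact (contDiff_cos.smul contDiff_const).add (hsin.smul contDiff_const)

lemma hasDerivAt_footballCurve_zero (hα : 0 < α) (a b : E) :
    HasDerivAt (footballCurve α a b) 0 0 := by
  have hcos : HasDerivAt cos 0 0 := by simpa using hasDerivAt_cos 0
  have hsin : HasDerivAt (fun r => sin r ^ (1 + α)) 0 0 := by
    simpa [zero_rpow hα.ne'] using
      (hasDerivAt_sin 0).rpow_const (p := 1 + α) (Or.inr (by linarith))
  have hsum := (hcos.smul_const a).add (hsin.smul_const b)
  rwa [zero_smul, zero_smul, add_zero] at hsum

end NormedSpace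

theorem stmt9_general {E : Type*} [NormedAddCommGroup E] [InnerProductSpace ℝ E] {α : ℝ}
    (hα : 0 < α) {a b : E} (hab : LinearIndependent ℝ ![a, b]) :
    (∀ r ∈ Ioo 0 π, footballCurve α a b r ≠ 0) ∧
    (∀ r ∈ Ioo 0 π, DifferentiableAt ℝ (fun s => normalize (footballCurve α a b s)) r) ∧
    Tendsto (fun r => ‖deriv (fun s => normalize (footballCurve α a b s)) r‖) (𝓝[>] 0) (𝓝 0) := by
  have hsmooth := contDiff_footballCurve hα.le a b
  have hpole : footballCurve α a b 0 ≠ 0 := by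
    rw [footballCurve_zero (by positivity)]
    exact hab.ne_zero 0
  refine ⟨fun r hr => footballCurve_ne_zero hab α hr, fun r hr => ?_, ?_⟩
  · exact ((contDiffAt_normalize (footballCurve_ne_zero hab α hr)).comp r
      hsmooth.contDiffAt).differentiableAt one_ne_zero
  · have hlim := tendsto_deriv_comp_of_hasDerivAt_zero (contDiffAt_normalize hpole)
      hsmooth.contDiffAt (hasDerivAt_footballCurve_zero hα a b)
    exact (tendsto_zero_iff_norm_tendsto_zero.1 hlim).mono_left nhdsWithin_le_nhds

lemma linearIndependent_pair_of_apply_eq_zero {𝕜 ι : Type*} [RCLike 𝕜] {a b : EuclideanSpace 𝕜 ι}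
    {i : ι} (ha : a i ≠ 0) (hb : b ≠ 0) (hbi : b i = 0) : LinearIndependent 𝕜 ![a, b] := by
  refine LinearIndependent.pair_iff.2 fun s t h => ?_
  have hs : s = 0 := by simpa [hbi, ha] using congrArg (· i) h
  exact ⟨hs, by simpa [hs, hb] using h⟩

lemma exists_eq_footballCurve {n : ℕ} {A B α : ℝ} (hA : A ≠ 0) (hB : B ≠ 0)
    {w : EuclideanSpace ℝ (Fin n)} (hw : w ≠ 0) {G : ℝ → EuclideanSpace ℝ (Fin (n + 1))}
    (hG0 : ∀ r, G r 0 = A * cos r) (hGs : ∀ r (i : Fin n), G r i.succ = B * sin r ^ (1 + α) * w i) :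
    ∃ a b, LinearIndependent ℝ ![a, b] ∧ G = footballCurve α a b := by
  let a : EuclideanSpace ℝ (Fin (n + 1)) := EuclideanSpace.single 0 A
  let b : EuclideanSpace ℝ (Fin (n + 1)) := WithLp.toLp 2 (Fin.cons 0 fun i => B * w i)
  have hb : b ≠ 0 := fun h => hw <| by
    ext i
    simpa [b, hB] using congrArg (· i.succ) h
  refine ⟨a, b, linearIndependent_pair_of_apply_eq_zero (i := 0) (by simpa [a]) hb rfl, ?_⟩
  ext r i
  cases i using Fin.cases with
  | zero => simp [footballCurve, a, b, hG0, mul_comm]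
  | succ i => simp [footballCurve, a, b, hGs, mul_assoc, mul_left_comm]

/-- Degeneracy of the normalized eigenfunction map of the football metric:
for `G(r) = (A cos r, B (sin r)^{1+α} w)` with `w` a unit vector in `ℝⁿ`,
the map `G` is nowhere zero on `(0, π/2)`, the normalized map `G/‖G‖` is
differentiable there, and the norm of its derivative tends to `0` as `r → 0⁺`. -/
theorem stmt9 (n : ℕ) (hn : 1 ≤ n) (A B α : ℝ) (hA : 0 < A) (hB : 0 < B) (hα : 0 < α)
    (w : EuclideanSpace ℝ (Fin n)) (hw : ‖w‖ = 1)
    (G : ℝ → EuclideanSpace ℝ (Fin (n + 1)))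
    (hG0 : ∀ r : ℝ, G r 0 = A * Real.cos r)
    (hGs : ∀ (r : ℝ) (i : Fin n), G r i.succ = B * Real.sin r ^ ((1 : ℝ) + α) * w i) :
    (∀ r ∈ Set.Ioo (0 : ℝ) (Real.pi / 2), G r ≠ 0) ∧
    (∀ r ∈ Set.Ioo (0 : ℝ) (Real.pi / 2),
      DifferentiableAt ℝ (fun s : ℝ => ‖G s‖⁻¹ • G s) r) ∧
    Filter.Tendsto (fun r : ℝ => ‖deriv (fun s : ℝ => ‖G s‖⁻¹ • G s) r‖)
      (nhdsWithin 0 (Set.Ioi 0)) (nhds 0) := by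
  have hsub : Ioo 0 (π / 2) ⊆ Ioo 0 π := Ioo_subset_Ioo_right (half_le_self pi_pos.le)
  obtain ⟨a, b, hab, rfl⟩ :=
    exists_eq_footballCurve hA.ne' hB.ne' (norm_ne_zero_iff.1 (hw ▸ one_ne_zero)) hG0 hGs
  obtain ⟨hne, hdiff, hlim⟩ := stmt9_general hα hab
  exact ⟨fun r hr => hne r (hsub hr), fun r hr => hdiff r (hsub hr), hlim⟩
end
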